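/- For every ε > 0, the number of GL₂(ℤ)-orbits of binary quartic forms f ∈ V(ℤ) with Δ(f) ≠ 0 and H(f) < X whose stabilizer in PGL₂(ℚ) (under the twisted action) is nontrivial is O_ε(X^{2/3+ε}). -/

import Mathlib

noncomputable section

namespace BQPaper

/-- A binary quartic form `a x⁴ + b x³y + c x²y² + d xy³ + e y⁴` over `R`,
recorded by its coefficients. -/
structure BQ (R : Type*) where
  a : R
  b : R
  c : R
  d : R
  e : R

/-- A 2×2 matrix `!![p, q; r, s]`, recorded by its entries. -/
structure Mat2 (R : Type*) where
  p : R
  q : R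
  r : R
  s : R

variable {R S : Type*} [CommRing R] [CommRing S]

def Mat2.det (m : Mat2 R) : R := m.p * m.s - m.q * m.r

/-- Matrix product. -/
def Mat2.mul (m n : Mat2 R) : Mat2 R :=
  ⟨m.p * n.p + m.q * n.r, m.p * n.q + m.q * n.s,
   m.r * n.p + m.s * n.r, m.r * n.q + m.s * n.s⟩

/-- Scalar multiple of a matrix. -/
def Mat2.smul (z : R) (m : Mat2 R) : Mat2 R := ⟨z * m.p, z * m.q, z * m.r, z * m.s⟩

def Mat2.map (φ : R →+* S) (m : Mat2 R) : Mat2 S := ⟨φ m.p, φ m.q, φ m.r, φ m.s⟩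

/-- Evaluation of a binary quartic form at `(x, y)`. -/
def BQ.eval (f : BQ R) (x y : R) : R :=
  f.a * x ^ 4 + f.b * x ^ 3 * y + f.c * x ^ 2 * y ^ 2 + f.d * x * y ^ 3 + f.e * y ^ 4

/-- The invariant `I(f) = 12ae − 3bd + c²`. -/
def BQ.invI (f : BQ R) : R := 12 * f.a * f.e - 3 * f.b * f.d + f.c ^ 2

/-- The invariant `J(f) = 72ace + 9bcd − 27ad² − 27eb² − 2c³`. -/
def BQ.invJ (f : BQ R) : R :=
  72 * f.a * f.c * f.e + 9 * f.b * f.c * f.d - 27 * f.a * f.d ^ 2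
    - 27 * f.e * f.b ^ 2 - 2 * f.c ^ 3

/-- The discriminant of a binary quartic form; one has `Δ = (4I³ − J²)/27`. -/
def BQ.disc (f : BQ R) : R :=
  256 * f.a ^ 3 * f.e ^ 3 - 192 * f.a ^ 2 * f.b * f.d * f.e ^ 2
    - 128 * f.a ^ 2 * f.c ^ 2 * f.e ^ 2 + 144 * f.a ^ 2 * f.c * f.d ^ 2 * f.e
    - 27 * f.a ^ 2 * f.d ^ 4 + 144 * f.a * f.b ^ 2 * f.c * f.e ^ 2
    - 6 * f.a * f.b ^ 2 * f.d ^ 2 * f.e - 80 * f.a * f.b * f.c ^ 2 * f.d * f.e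
    + 18 * f.a * f.b * f.c * f.d ^ 3 + 16 * f.a * f.c ^ 4 * f.e
    - 4 * f.a * f.c ^ 3 * f.d ^ 2 - 27 * f.b ^ 4 * f.e ^ 2
    + 18 * f.b ^ 3 * f.c * f.d * f.e - 4 * f.b ^ 3 * f.d ^ 3
    - 4 * f.b ^ 2 * f.c ^ 3 * f.e + f.b ^ 2 * f.c ^ 2 * f.d ^ 2

/-- Multiplication of all coefficients of a form by a scalar. -/
def BQ.rsmul (t : R) (f : BQ R) : BQ R := ⟨t * f.a, t * f.b, t * f.c, t * f.d, t * f.e⟩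

/-- Substitution action of a 2×2 matrix on binary quartic forms:
`(m • f)(x,y) = f((x,y)·m) = f(px + ry, qx + sy)` for `m = !![p, q; r, s]`. -/
def BQ.subst (m : Mat2 R) (f : BQ R) : BQ R where
  a := f.a * m.p ^ 4 + f.b * m.p ^ 3 * m.q + f.c * m.p ^ 2 * m.q ^ 2
      + f.d * m.p * m.q ^ 3 + f.e * m.q ^ 4
  b := 4 * f.a * m.p ^ 3 * m.r + f.b * m.p ^ 3 * m.s + 3 * f.b * m.p ^ 2 * m.q * m.r
      + 2 * f.c * m.p ^ 2 * m.q * m.s + 2 * f.c * m.p * m.q ^ 2 * m.r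
      + 3 * f.d * m.p * m.q ^ 2 * m.s + f.d * m.q ^ 3 * m.r + 4 * f.e * m.q ^ 3 * m.s
  c := 6 * f.a * m.p ^ 2 * m.r ^ 2 + 3 * f.b * m.p ^ 2 * m.r * m.s
      + 3 * f.b * m.p * m.q * m.r ^ 2 + f.c * m.p ^ 2 * m.s ^ 2
      + 4 * f.c * m.p * m.q * m.r * m.s + f.c * m.q ^ 2 * m.r ^ 2
      + 3 * f.d * m.p * m.q * m.s ^ 2 + 3 * f.d * m.q ^ 2 * m.r * m.s
      + 6 * f.e * m.q ^ 2 * m.s ^ 2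
  d := 4 * f.a * m.p * m.r ^ 3 + 3 * f.b * m.p * m.r ^ 2 * m.s + f.b * m.q * m.r ^ 3
      + 2 * f.c * m.p * m.r * m.s ^ 2 + 2 * f.c * m.q * m.r ^ 2 * m.s
      + f.d * m.p * m.s ^ 3 + 3 * f.d * m.q * m.r * m.s ^ 2 + 4 * f.e * m.q * m.s ^ 3
  e := f.a * m.r ^ 4 + f.b * m.r ^ 3 * m.s + f.c * m.r ^ 2 * m.s ^ 2
      + f.d * m.r * m.s ^ 3 + f.e * m.s ^ 4

/-- The twisted action `(γ·f)(x,y) = f((x,y)·γ)/det(γ)²`, which descends to `PGL₂`.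
(`Ring.inverse` is the genuine inverse when `det` is a unit.) -/
def BQ.twist (m : Mat2 R) (f : BQ R) : BQ R :=
  BQ.rsmul (Ring.inverse m.det ^ 2) (f.subst m)

/-- Coefficientwise map of forms along a ring homomorphism. -/
def BQ.map (φ : R →+* S) (f : BQ R) : BQ S := ⟨φ f.a, φ f.b, φ f.c, φ f.d, φ f.e⟩

end BQPaper

namespace BQPaper

/-- The height `H(I,J) = max(|I|³, J²/4)`. -/
def heightIJ (I J : ℝ) : ℝ := max (|I| ^ 3) (J ^ 2 / 4)

/-- The height of an integral binary quartic form. -/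
def BQ.height (f : BQ ℤ) : ℝ := heightIJ (f.invI : ℝ) (f.invJ : ℝ)

/-- `GL₂(ℤ)`-equivalence of integral binary quartic forms (substitution action). -/
def IntEquiv (f g : BQ ℤ) : Prop := ∃ m : Mat2 ℤ, IsUnit m.det ∧ g = f.subst m

/-- `f` has nontrivial stabiliser in `PGL₂(ℚ)` under the twisted action:  some matrix
in `GL₂(ℚ)` which is not a scalar fixes `f`. -/
def NontrivialStab (f : BQ ℤ) : Prop :=
  ∃ m : Mat2 ℚ, IsUnit m.det ∧
    (f.map (Int.castRingHom ℚ)).twist m = f.map (Int.castRingHom ℚ) ∧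
    ¬ ∃ z : ℚ, m = ⟨z, 0, 0, z⟩

/-- The forms counted in Statement 6: nonzero discriminant, height `< X`, and
nontrivial stabiliser in `PGL₂(ℚ)`. -/
def StabForms (X : ℝ) : Type _ :=
  {f : BQ ℤ // f.disc ≠ 0 ∧ f.height < X ∧ NontrivialStab f}

def stabFormsRel (X : ℝ) (f g : StabForms X) : Prop := IntEquiv f.val g.val

theorem BQ.ext' {R : Type*} {f g : BQ R} (h1 : f.a = g.a) (h2 : f.b = g.b) (h3 : f.c = g.c)
    (h4 : f.d = g.d) (h5 : f.e = g.e) : f = g := by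
  cases f; cases g; simp_all

theorem subst_subst {R : Type*} [CommRing R] (f : BQ R) (m k : Mat2 R) :
    (f.subst m).subst k = f.subst (k.mul m) := by
  apply BQ.ext' <;> simp only [BQ.subst, Mat2.mul] <;> ring

theorem det_mul {R : Type*} [CommRing R] (m k : Mat2 R) : (k.mul m).det = k.det * m.det := by
  simp only [Mat2.det, Mat2.mul]; ring

theorem invI_subst {R : Type*} [CommRing R] (f : BQ R) (m : Mat2 R) :
    (f.subst m).invI = m.det ^ 4 * f.invI := by
  simp only [BQ.subst, Mat2.det, BQ.invI]; ring

theorem invJ_subst {R : Type*} [CommRing R] (f : BQ R) (m : Mat2 R) :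
    (f.subst m).invJ = m.det ^ 6 * f.invJ := by
  simp only [BQ.subst, Mat2.det, BQ.invJ]; ring

theorem disc_eq {R : Type*} [CommRing R] (f : BQ R) :
    27 * f.disc = 4 * f.invI ^ 3 - f.invJ ^ 2 := by
  simp only [BQ.disc, BQ.invI, BQ.invJ]; ring

/-- `Q(∂) f` is proportional to `Q`. -/
def Eig {R : Type*} [CommRing R] (f : BQ R) (A B C t : R) : Prop :=
  12 * f.a * C - 3 * f.b * B + 2 * f.c * A = 2 * t * A ∧
  3 * f.b * C - 2 * f.c * B + 3 * f.d * A = t * B ∧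
  2 * f.c * C - 3 * f.d * B + 12 * f.e * A = 2 * t * C

def qA {R : Type*} [CommRing R] (m : Mat2 R) (A B C : R) : R :=
  A * m.p ^ 2 + B * m.p * m.q + C * m.q ^ 2
def qB {R : Type*} [CommRing R] (m : Mat2 R) (A B C : R) : R :=
  2 * A * m.p * m.r + B * (m.p * m.s + m.q * m.r) + 2 * C * m.q * m.s
def qC {R : Type*} [CommRing R] (m : Mat2 R) (A B C : R) : R :=
  A * m.r ^ 2 + B * m.r * m.s + C * m.s ^ 2

theorem qdisc {R : Type*} [CommRing R] (m : Mat2 R) (A B C : R) :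
    qB m A B C ^ 2 - 4 * qA m A B C * qC m A B C = m.det ^ 2 * (B ^ 2 - 4 * A * C) := by
  simp only [qA, qB, qC, Mat2.det]; ring

theorem Eig.subst {R : Type*} [CommRing R] {f : BQ R} {A B C t : R} (h : Eig f A B C t)
    (m : Mat2 R) : Eig (f.subst m) (qA m A B C) (qB m A B C) (qC m A B C) (m.det ^ 2 * t) := by
  obtain ⟨h1, h2, h3⟩ := h
  refine ⟨?_, ?_, ?_⟩ <;> simp only [BQ.subst, qA, qB, qC, Mat2.det]
  · linear_combination (m.p * m.s - m.q * m.r) ^ 2 *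
      (m.p ^ 2 * h1 + 2 * m.p * m.q * h2 + m.q ^ 2 * h3)
  · linear_combination (m.p * m.s - m.q * m.r) ^ 2 *
      (m.p * m.r * h1 + (m.p * m.s + m.q * m.r) * h2 + m.q * m.s * h3)
  · linear_combination (m.p * m.s - m.q * m.r) ^ 2 *
      (m.r ^ 2 * h1 + 2 * m.r * m.s * h2 + m.s ^ 2 * h3)

/-- companion case -/
theorem companion_case (f : BQ ℚ) (τ δ : ℚ) (hδ : δ ≠ 0) (hd : f.disc ≠ 0)
    (h : f.subst ⟨0, 1, -δ, τ⟩ = BQ.rsmul (δ ^ 2) f) :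
    ∃ t, Eig f 1 0 δ t := by
  have h1 := congrArg BQ.a h
  have h2 := congrArg BQ.b h
  have h3 := congrArg BQ.c h
  have h4 := congrArg BQ.d h
  simp only [BQ.subst, BQ.rsmul] at h1 h2 h3 h4
  obtain ⟨a, b, c, d, e⟩ := f
  simp only at h1 h2 h3 h4
  have he : e = δ ^ 2 * a := by linear_combination h1
  subst he
  by_cases hτ : τ = 0
  · subst hτ
    have hd' : d = - δ * b := by
      have : δ * (d + δ * b) = 0 := by linear_combination -h2
      rcases mul_eq_zero.1 this with h | h
      · exact absurd h hδ
      · linear_combination h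
    subst hd'
    refine ⟨6 * a * δ + c, ?_, ?_, ?_⟩ <;> simp only <;> ring
  · exfalso
    have hd' : d = 2 * δ * a * τ := by
      have : τ * δ * (2 * δ * a * τ - d) = 0 := by linear_combination h3 / 3
      rcases mul_eq_zero.1 this with h | h
      · simp_all
      · linear_combination -h
    subst hd'
    have hb : b = 2 * a * τ := by
      have : δ ^ 2 * (b - 2 * a * τ) = 0 := by linear_combination -h2
      rcases mul_eq_zero.1 this with h | h
      · simp_all
      · linear_combination h
    subst hb
    have hc : c = a * (2 * δ + τ ^ 2) := by
      have : δ ^ 2 * τ * (c - a * (2 * δ + τ ^ 2)) = 0 := by linear_combination h4 / 2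
      rcases mul_eq_zero.1 this with h | h
      · simp_all
      · linear_combination h
    subst hc
    apply hd
    simp only [BQ.disc]; ring

theorem exists_cyclic (m : Mat2 ℚ) (h : ¬ ∃ z : ℚ, m = ⟨z, 0, 0, z⟩) :
    ∃ v w : ℚ, v * (v * m.q + w * m.s) - w * (v * m.p + w * m.r) ≠ 0 := by
  by_contra! hc
  apply h
  have h1 := hc 1 0
  have h2 := hc 0 1
  have h3 := hc 1 1
  obtain ⟨p, q, r, s⟩ := m
  simp only at h1 h2 h3
  have hq : q = 0 := by linarith
  have hr : r = 0 := by linarith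
  have hs : s = p := by linarith
  subst hq hr hs
  exact ⟨s, rfl⟩

theorem stepA (f : BQ ℚ) (hd : f.disc ≠ 0) (m : Mat2 ℚ) (hm : IsUnit m.det)
    (h : f.twist m = f) (hs : ¬ ∃ z : ℚ, m = ⟨z, 0, 0, z⟩) :
    ∃ A B C t : ℚ, B ^ 2 - 4 * A * C ≠ 0 ∧ Eig f A B C t := by
  have hδ : m.det ≠ 0 := hm.ne_zero
  have hsub : f.subst m = BQ.rsmul (m.det ^ 2) f := by
    conv_rhs => rw [← h]
    simp only [BQ.twist, BQ.rsmul, Ring.inverse_eq_inv']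
    apply BQ.ext' <;> simp only <;> field_simp
  obtain ⟨v, w, hvw⟩ := exists_cyclic m hs
  set g : Mat2 ℚ := ⟨v, w, v * m.p + w * m.r, v * m.q + w * m.s⟩ with hg
  have hgd : g.det ≠ 0 := by simpa only [hg, Mat2.det] using hvw
  have hcomm : Mat2.mul ⟨0, 1, -m.det, m.p + m.s⟩ g = g.mul m := by
    simp only [hg, Mat2.mul, Mat2.det, Mat2.mk.injEq]
    refine ⟨by ring, by ring, by ring, by ring⟩
  have h1 : (f.subst g).subst ⟨0, 1, -m.det, m.p + m.s⟩ = BQ.rsmul (m.det ^ 2) (f.subst g) := by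
    rw [subst_subst, hcomm, ← subst_subst, hsub]
    apply BQ.ext' <;> simp only [BQ.subst, BQ.rsmul] <;> ring
  have hd1 : (f.subst g).disc ≠ 0 := by
    intro h0
    have := disc_eq (f.subst g)
    rw [h0, invI_subst, invJ_subst] at this
    have h2 : g.det ^ 12 * (27 * f.disc) = 0 := by
      rw [disc_eq]; linear_combination -this
    exact (mul_ne_zero (pow_ne_zero _ hgd) (mul_ne_zero (by norm_num) hd)) h2
  obtain ⟨t, ht⟩ := companion_case _ _ _ hδ hd1 h1
  have h2 := ht.subst ⟨g.s, -g.q, -g.r, g.p⟩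
  rw [subst_subst] at h2
  have hdet : (⟨g.s, -g.q, -g.r, g.p⟩ : Mat2 ℚ).det = g.det := by simp only [Mat2.det]; ring
  have h3 : f.subst (Mat2.mul ⟨g.s, -g.q, -g.r, g.p⟩ g) = BQ.rsmul (g.det ^ 4) f := by
    apply BQ.ext' <;> simp only [BQ.subst, BQ.rsmul, Mat2.mul, Mat2.det] <;> ring
  have hq := qdisc (⟨g.s, -g.q, -g.r, g.p⟩ : Mat2 ℚ) 1 0 m.det
  rw [h3, hdet] at h2
  rw [hdet] at hq
  refine ⟨qA ⟨g.s, -g.q, -g.r, g.p⟩ 1 0 m.det, qB ⟨g.s, -g.q, -g.r, g.p⟩ 1 0 m.det,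
    qC ⟨g.s, -g.q, -g.r, g.p⟩ 1 0 m.det, t / g.det ^ 2, ?_, ?_⟩
  swap
  · obtain ⟨e1, e2, e3⟩ := h2
    simp only [BQ.rsmul] at e1 e2 e3
    refine ⟨?_, ?_, ?_⟩
    · field_simp
      apply mul_left_cancel₀ (pow_ne_zero 2 hgd)
      linear_combination e1
    · field_simp
      apply mul_left_cancel₀ (pow_ne_zero 2 hgd)
      linear_combination e2
    · field_simp
      apply mul_left_cancel₀ (pow_ne_zero 2 hgd)
      linear_combination e3
  · rw [hq]
    refine mul_ne_zero (pow_ne_zero _ hgd) ?_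
    simpa using hδ


theorem charpoly_mul {R : Type*} [CommRing R] {f : BQ R} {A B C t : R} (h : Eig f A B C t) :
    4 * (t ^ 3 - 3 * f.invI * t - f.invJ) * A = 0 ∧
    4 * (t ^ 3 - 3 * f.invI * t - f.invJ) * B = 0 ∧
    4 * (t ^ 3 - 3 * f.invI * t - f.invJ) * C = 0 := by
  obtain ⟨h1, h2, h3⟩ := h
  obtain ⟨a, b, c, d, e⟩ := f
  simp only [BQ.invI, BQ.invJ] at *
  refine ⟨?_, ?_, ?_⟩
  · linear_combination -((-2 * c - t) * (2 * c - 2 * t) - 3 * b * (-3 * d)) * h1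
      + ((-3 * b) * (2 * c - 2 * t) - 12 * a * (-3 * d)) * h2
      - ((-3 * b) * (3 * b) - 12 * a * (-2 * c - t)) * h3
  · linear_combination ((3 * d) * (2 * c - 2 * t) - 3 * b * (12 * e)) * h1
      - ((2 * c - 2 * t) * (2 * c - 2 * t) - 12 * a * (12 * e)) * h2
      + ((2 * c - 2 * t) * (3 * b) - 12 * a * (3 * d)) * h3
  · linear_combination -((3 * d) * (-3 * d) - (-2 * c - t) * (12 * e)) * h1
      + ((2 * c - 2 * t) * (-3 * d) - (-3 * b) * (12 * e)) * h2
      - ((2 * c - 2 * t) * (-2 * c - t) - (-3 * b) * (3 * d)) * h3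

def Prim (A B C : ℤ) : Prop := ∃ x y z : ℤ, x * A + y * B + z * C = 1

theorem Eig.cubic {f : BQ ℤ} {A B C t : ℤ} (h : Eig f A B C t) (hp : Prim A B C) :
    t ^ 3 = 3 * f.invI * t + f.invJ := by
  obtain ⟨h1, h2, h3⟩ := charpoly_mul h
  obtain ⟨x, y, z, hx⟩ := hp
  have : 4 * (t ^ 3 - 3 * f.invI * t - f.invJ) = 0 := by
    linear_combination -(4 * (t ^ 3 - 3 * f.invI * t - f.invJ)) * hx + x * h1 + y * h2 + z * h3
  linarith

theorem exists_prim (A B C : ℤ) (h : B ^ 2 - 4 * A * C ≠ 0) :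
    ∃ g A' B' C' : ℤ, g ≠ 0 ∧ A = g * A' ∧ B = g * B' ∧ C = g * C' ∧ Prim A' B' C' := by
  have e1 := Int.gcd_eq_gcd_ab B C
  have e2 := Int.gcd_eq_gcd_ab A (Int.gcd B C)
  have d1 : ((Int.gcd A (Int.gcd B C) : ℕ) : ℤ) ∣ A := Int.gcd_dvd_left ..
  have d2 : ((Int.gcd A (Int.gcd B C) : ℕ) : ℤ) ∣ (Int.gcd B C : ℕ) := Int.gcd_dvd_right ..
  have d3 : ((Int.gcd A (Int.gcd B C) : ℕ) : ℤ) ∣ B := d2.trans (Int.gcd_dvd_left ..)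
  have d4 : ((Int.gcd A (Int.gcd B C) : ℕ) : ℤ) ∣ C := d2.trans (Int.gcd_dvd_right ..)
  generalize ((Int.gcd A (Int.gcd B C) : ℕ) : ℤ) = g at *
  obtain ⟨A', hA⟩ := d1
  obtain ⟨B', hB⟩ := d3
  obtain ⟨C', hC⟩ := d4
  have hg : g ≠ 0 := by
    rintro rfl
    apply h; rw [hA, hB, hC]; ring
  refine ⟨g, A', B', C', hg, hA, hB, hC, Int.gcdA A (Int.gcd B C),
    Int.gcdB A (Int.gcd B C) * Int.gcdA B C, Int.gcdB A (Int.gcd B C) * Int.gcdB B C, ?_⟩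
  apply mul_left_cancel₀ hg
  generalize Int.gcdA A (Int.gcd B C) = x1 at *
  generalize Int.gcdB A (Int.gcd B C) = x2 at *
  generalize ((Int.gcd B C : ℕ) : ℤ) = g1 at *
  linear_combination (-x1) * hA - (x2 * Int.gcdA B C) * hB - (x2 * Int.gcdB B C) * hC - x2 * e1 - e2

theorem stepB (f : BQ ℤ) (hd : f.disc ≠ 0) (hs : NontrivialStab f) :
    ∃ A B C t : ℤ, B ^ 2 - 4 * A * C ≠ 0 ∧ Prim A B C ∧ Eig f A B C t := by
  obtain ⟨m, hm, h1, h2⟩ := hs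
  have hd' : (f.map (Int.castRingHom ℚ)).disc ≠ 0 := by
    have : (f.map (Int.castRingHom ℚ)).disc = ((f.disc : ℤ) : ℚ) := by
      simp [BQ.map, BQ.disc]
    rw [this]; exact_mod_cast hd
  obtain ⟨A, B, C, t, hD, hE⟩ := stepA _ hd' m hm h1 h2
  -- clear denominators
  have hA : (A.num : ℚ) = A * A.den := (Rat.mul_den_eq_num A).symm
  have hB : (B.num : ℚ) = B * B.den := (Rat.mul_den_eq_num B).symm
  have hC : (C.num : ℚ) = C * C.den := (Rat.mul_den_eq_num C).symm
  have nA : (A.den : ℚ) ≠ 0 := by exact_mod_cast A.den_nz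
  have nB : (B.den : ℚ) ≠ 0 := by exact_mod_cast B.den_nz
  have nC : (C.den : ℚ) ≠ 0 := by exact_mod_cast C.den_nz
  obtain ⟨k, hk0, hk⟩ : ∃ k : ℚ, k ≠ 0 ∧ k = A.den * B.den * C.den :=
    ⟨_, by positivity, rfl⟩
  obtain ⟨A1, hA1⟩ : ∃ A1 : ℤ, (A1 : ℚ) = k * A :=
    ⟨A.num * B.den * C.den, by push_cast; rw [hA, hk]; ring⟩
  obtain ⟨B1, hB1⟩ : ∃ A1 : ℤ, (A1 : ℚ) = k * B :=
    ⟨B.num * A.den * C.den, by push_cast; rw [hB, hk]; ring⟩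
  obtain ⟨C1, hC1⟩ : ∃ A1 : ℤ, (A1 : ℚ) = k * C :=
    ⟨C.num * B.den * A.den, by push_cast; rw [hC, hk]; ring⟩
  have hD1 : B1 ^ 2 - 4 * A1 * C1 ≠ 0 := by
    intro h0
    have : ((B1 ^ 2 - 4 * A1 * C1 : ℤ) : ℚ) = 0 := by rw [h0]; rfl
    push_cast at this
    rw [hA1, hB1, hC1] at this
    have h3 : k ^ 2 * (B ^ 2 - 4 * A * C) = 0 := by linear_combination this
    exact mul_ne_zero (pow_ne_zero _ hk0) hD h3
  obtain ⟨g, a, b, c, hg, ea, eb, ec, hp⟩ := exists_prim A1 B1 C1 hD1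
  have hgq : (g : ℚ) ≠ 0 := by exact_mod_cast hg
  have qa : A = g / k * a := by
    field_simp; rw [← Int.cast_mul, ← ea, hA1]; ring
  have qb : B = g / k * b := by
    field_simp; rw [← Int.cast_mul, ← eb, hB1]; ring
  have qc : C = g / k * c := by
    field_simp; rw [← Int.cast_mul, ← ec, hC1]; ring
  have hgk : (g : ℚ) / k ≠ 0 := div_ne_zero hgq hk0
  generalize (g : ℚ) / k = w at *
  have hD2 : b ^ 2 - 4 * a * c ≠ 0 := by
    intro h0
    have : ((b ^ 2 - 4 * a * c : ℤ) : ℚ) = 0 := by rw [h0]; rfl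
    push_cast at this
    apply hD
    rw [qa, qb, qc]; linear_combination w ^ 2 * this
  obtain ⟨x, y, z, hx⟩ := hp
  obtain ⟨e1, e2, e3⟩ := hE
  simp only [BQ.map, eq_intCast] at e1 e2 e3
  subst qa qb qc
  have f1 : 12 * (f.a : ℚ) * c - 3 * f.b * b + 2 * f.c * a = 2 * t * a := by
    apply mul_left_cancel₀ hgk; linear_combination e1
  have f2 : 3 * (f.b : ℚ) * c - 2 * f.c * b + 3 * f.d * a = t * b := by
    apply mul_left_cancel₀ hgk; linear_combination e2
  have f3 : 2 * (f.c : ℚ) * c - 3 * f.d * b + 12 * f.e * a = 2 * t * c := by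
    apply mul_left_cancel₀ hgk; linear_combination e3
  have hxq : (x : ℚ) * a + y * b + z * c = 1 := by exact_mod_cast hx
  obtain ⟨l, hl⟩ : ∃ l : ℤ, (l : ℚ) = 2 * t := by
    refine ⟨x * (12 * f.a * c - 3 * f.b * b + 2 * f.c * a)
      + y * (2 * (3 * f.b * c - 2 * f.c * b + 3 * f.d * a))
      + z * (2 * f.c * c - 3 * f.d * b + 12 * f.e * a), ?_⟩
    push_cast
    linear_combination x * f1 + 2 * y * f2 + z * f3 + 2 * t * hxq
  have hEq : Eig (f.map (Int.castRingHom ℚ)) (a : ℚ) b c t := ⟨f1, f2, f3⟩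
  obtain ⟨c1, c2, c3⟩ := charpoly_mul hEq
  have hc0 : 4 * (t ^ 3 - 3 * (f.map (Int.castRingHom ℚ)).invI * t
      - (f.map (Int.castRingHom ℚ)).invJ) = 0 := by
    linear_combination (-(4 * (t ^ 3 - 3 * (f.map (Int.castRingHom ℚ)).invI * t
      - (f.map (Int.castRingHom ℚ)).invJ))) * hxq + x * c1 + y * c2 + z * c3
  have hI : (f.map (Int.castRingHom ℚ)).invI = (f.invI : ℤ) := by simp [BQ.map, BQ.invI]
  have hJ : (f.map (Int.castRingHom ℚ)).invJ = (f.invJ : ℤ) := by simp [BQ.map, BQ.invJ]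
  rw [hI, hJ] at hc0
  have hl3 : l ^ 3 = 2 * (6 * f.invI * l + 4 * f.invJ) := by
    have : (l : ℚ) ^ 3 = 2 * (6 * f.invI * l + 4 * f.invJ) := by
      rw [hl]; linear_combination 2 * hc0
    exact_mod_cast this
  have hev : (2 : ℤ) ∣ l := Int.prime_two.dvd_of_dvd_pow (Dvd.intro _ hl3.symm)
  obtain ⟨t', rfl⟩ := hev
  have ht : t = t' := by push_cast at hl; linarith
  subst ht
  refine ⟨a, b, c, t', hD2, ⟨x, y, z, hx⟩, ?_, ?_, ?_⟩
  · exact_mod_cast f1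
  · exact_mod_cast f2
  · exact_mod_cast f3


theorem det_sq {m : Mat2 ℤ} (h : IsUnit m.det) : m.det ^ 2 = 1 := by
  rcases Int.isUnit_iff.1 h with h | h <;> rw [h] <;> norm_num

theorem subst_one (f : BQ ℤ) : f.subst ⟨1, 0, 0, 1⟩ = f := by
  apply BQ.ext' <;> simp [BQ.subst]

theorem IntEquiv.refl (f : BQ ℤ) : IntEquiv f f :=
  ⟨⟨1, 0, 0, 1⟩, by simp [Mat2.det], (subst_one f).symm⟩

theorem IntEquiv.trans {f g h : BQ ℤ} (h1 : IntEquiv f g) (h2 : IntEquiv g h) : IntEquiv f h := by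
  obtain ⟨m, hm, rfl⟩ := h1
  obtain ⟨k, hk, rfl⟩ := h2
  exact ⟨k.mul m, by rw [det_mul]; exact hk.mul hm, subst_subst ..⟩

theorem IntEquiv.symm {f g : BQ ℤ} (h1 : IntEquiv f g) : IntEquiv g f := by
  obtain ⟨m, hm, rfl⟩ := h1
  refine ⟨⟨m.s, -m.q, -m.r, m.p⟩, ?_, ?_⟩
  · have : (⟨m.s, -m.q, -m.r, m.p⟩ : Mat2 ℤ).det = m.det := by simp only [Mat2.det]; ring
    rwa [this]
  · have h2 := det_sq hm
    have : f.subst (Mat2.mul ⟨m.s, -m.q, -m.r, m.p⟩ m) = BQ.rsmul ((m.det ^ 2) ^ 2) f := by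
      apply BQ.ext' <;> simp only [BQ.subst, BQ.rsmul, Mat2.mul, Mat2.det] <;> ring
    rw [subst_subst, this, h2]
    apply BQ.ext' <;> simp [BQ.rsmul]

theorem IntEquiv.invI_eq {f g : BQ ℤ} (h1 : IntEquiv f g) : g.invI = f.invI := by
  obtain ⟨m, hm, rfl⟩ := h1
  rw [invI_subst]
  have h2 := det_sq hm
  linear_combination (m.det ^ 2 + 1) * f.invI * h2

theorem IntEquiv.invJ_eq {f g : BQ ℤ} (h1 : IntEquiv f g) : g.invJ = f.invJ := by
  obtain ⟨m, hm, rfl⟩ := h1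
  rw [invJ_subst]
  have h2 := det_sq hm
  linear_combination (m.det ^ 4 + m.det ^ 2 + 1) * f.invJ * h2

theorem Prim.subst {A B C : ℤ} (h : Prim A B C) {m : Mat2 ℤ} (hm : IsUnit m.det) :
    Prim (qA m A B C) (qB m A B C) (qC m A B C) := by
  obtain ⟨x, y, z, hx⟩ := h
  have h2 := det_sq hm
  refine ⟨x * m.s ^ 2 - y * 2 * m.s * m.r + z * m.r ^ 2,
     -x * m.s * m.q + y * (m.s * m.p + m.q * m.r) - z * m.r * m.p,
     x * m.q ^ 2 - y * 2 * m.q * m.p + z * m.p ^ 2, ?_⟩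
  simp only [qA, qB, qC, Mat2.det] at *
  linear_combination hx + (x * A + y * B + z * C) * h2

theorem Eig.subst_int {f : BQ ℤ} {A B C t : ℤ} (h : Eig f A B C t)
    {m : Mat2 ℤ} (hm : IsUnit m.det) :
    Eig (f.subst m) (qA m A B C) (qB m A B C) (qC m A B C) t := by
  have := h.subst m
  rwa [det_sq hm, one_mul] at this

theorem qdisc_int {A B C : ℤ} {m : Mat2 ℤ} (hm : IsUnit m.det) :
    qB m A B C ^ 2 - 4 * qA m A B C * qC m A B C = B ^ 2 - 4 * A * C := by
  rw [qdisc, det_sq hm, one_mul]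

theorem qA_mul (k m : Mat2 ℤ) (A B C : ℤ) :
    qA (k.mul m) A B C = qA k (qA m A B C) (qB m A B C) (qC m A B C) := by
  simp only [qA, qB, qC, Mat2.mul]; ring
theorem qB_mul (k m : Mat2 ℤ) (A B C : ℤ) :
    qB (k.mul m) A B C = qB k (qA m A B C) (qB m A B C) (qC m A B C) := by
  simp only [qA, qB, qC, Mat2.mul]; ring
theorem qC_mul (k m : Mat2 ℤ) (A B C : ℤ) :
    qC (k.mul m) A B C = qC k (qA m A B C) (qB m A B C) (qC m A B C) := by
  simp only [qA, qB, qC, Mat2.mul]; ring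

def Red (A B C : ℤ) : Prop :=
  B ^ 2 ≤ |B ^ 2 - 4 * A * C| ∧ (A = 0 → |C| ≤ |B|) ∧ (A ≠ 0 → C ≠ 0)

theorem exists_shift (A B : ℤ) (hA : A ≠ 0) : ∃ j : ℤ, |2 * A * j + B| ≤ |A| := by
  have hp : 0 < 2 * |A| := by have := abs_pos.2 hA; linarith
  have h1 := Int.emod_add_mul_ediv (B + |A|) (2 * |A|)
  have h2 := Int.emod_nonneg (B + |A|) hp.ne'
  have h3 := Int.emod_lt_of_pos (B + |A|) hp
  refine ⟨- (A.sign * ((B + |A|) / (2 * |A|))), ?_⟩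
  have h4 : A * A.sign = |A| := Int.mul_sign_self A |>.trans (Int.abs_eq_natAbs A).symm
  have : 2 * A * (- (A.sign * ((B + |A|) / (2 * |A|)))) + B
      = (B + |A|) % (2 * |A|) - |A| := by
    linear_combination (-2 * ((B + |A|) / (2 * |A|))) * h4 - h1
  rw [this, abs_le]
  constructor <;> linarith

theorem reduce (A B C : ℤ) (hD : B ^ 2 - 4 * A * C ≠ 0) :
    ∃ m : Mat2 ℤ, IsUnit m.det ∧ Red (qA m A B C) (qB m A B C) (qC m A B C) := by
  classical
  have hex : ∃ n : ℕ, ∃ m : Mat2 ℤ, IsUnit m.det ∧ n = (qA m A B C).natAbs :=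
    ⟨_, ⟨1, 0, 0, 1⟩, by simp [Mat2.det], rfl⟩
  obtain ⟨m, hm, hn⟩ := Nat.find_spec hex
  have hmin : ∀ k : Mat2 ℤ, IsUnit k.det → |qA m A B C| ≤ |qA k A B C| := by
    intro k hk
    have := Nat.find_min' hex ⟨k, hk, rfl⟩
    rw [hn] at this
    rw [Int.abs_eq_natAbs, Int.abs_eq_natAbs]; exact_mod_cast this
  have hD' := qdisc_int (A := A) (B := B) (C := C) hm
  rw [← hD'] at hD
  have key : ∀ j : ℤ, IsUnit ((⟨1, 0, j, 1⟩ : Mat2 ℤ).mul m).det := by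
    intro j; rw [det_mul]; exact IsUnit.mul (by simp [Mat2.det]) hm
  have hmin' : ∀ k : Mat2 ℤ, IsUnit k.det →
      |qA m A B C| ≤ |qA k (qA m A B C) (qB m A B C) (qC m A B C)| := by
    intro k hk
    rw [← qA_mul]
    exact hmin _ (by rw [det_mul]; exact hk.mul hm)
  generalize hA0 : qA m A B C = A0 at *
  generalize hB0 : qB m A B C = B0 at *
  generalize hC0 : qC m A B C = C0 at *
  by_cases hz : A0 = 0
  · subst hz
    have hB : B0 ≠ 0 := by rintro rfl; simp at hD
    refine ⟨_, key (-(C0 / B0)), ?_⟩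
    rw [qA_mul, qB_mul, qC_mul, hA0, hB0, hC0]
    have e := Int.emod_add_mul_ediv C0 B0
    have h2 := Int.emod_nonneg C0 hB
    have h3 := Int.emod_lt_abs C0 hB
    have : qC ⟨1, 0, -(C0 / B0), 1⟩ 0 B0 C0 = C0 % B0 := by
      simp only [qC]; linear_combination -e
    rw [this]
    simp only [qA, qB]
    refine ⟨?_, ?_, ?_⟩
    · simp
    · intro _; rw [abs_of_nonneg h2]; simpa using h3.le
    · intro h; simp at h
  · obtain ⟨j, hj⟩ := exists_shift A0 B0 hz
    refine ⟨_, key j, ?_⟩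
    have h1 := hmin' (Mat2.mul ⟨0, 1, 1, 0⟩ ⟨1, 0, j, 1⟩) (by simp [Mat2.det, Mat2.mul])
    rw [qA_mul] at h1
    rw [qA_mul, qB_mul, qC_mul, hA0, hB0, hC0]
    have ea : qA ⟨1, 0, j, 1⟩ A0 B0 C0 = A0 := by simp [qA]
    have eb : qB ⟨1, 0, j, 1⟩ A0 B0 C0 = 2 * A0 * j + B0 := by simp [qB]
    rw [ea, eb] at h1 ⊢
    generalize qC ⟨1, 0, j, 1⟩ A0 B0 C0 = C1 at *
    generalize 2 * A0 * j + B0 = B1 at *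
    have h2 : |A0| ≤ |C1| := by simpa [qA] using h1
    have hpos := abs_pos.2 hz
    refine ⟨?_, fun h => absurd h hz, fun _ hc => ?_⟩
    · have h3 : |B1| * |B1| ≤ |A0| * |C1| :=
        mul_le_mul hj (hj.trans h2) (abs_nonneg _) (abs_nonneg _)
      rw [← abs_mul, ← abs_mul, ← pow_two, abs_of_nonneg (sq_nonneg B1)] at h3
      have h4 := abs_sub_abs_le_abs_sub (4 * A0 * C1) (B1 ^ 2)
      rw [abs_sub_comm, mul_assoc, abs_mul, abs_of_nonneg (sq_nonneg B1)] at h4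
      rw [mul_assoc]
      norm_num at h4
      rw [abs_mul] at h3
      nlinarith [sq_nonneg B1]
    · rw [hc] at h2; simp at h2; exact hz h2

theorem exists_coprime_value {A B C : ℤ} (hprim : Prim A B C) {M : ℤ} (hM : M ≠ 0) :
    ∃ m : Mat2 ℤ, IsUnit m.det ∧ IsCoprime (qA m A B C) M := by
  classical
  set S2 := M.natAbs.primeFactors.filter (fun p : ℕ => (p : ℤ) ∣ A ∧ ¬ (p : ℤ) ∣ C) with hS2
  set S3 := M.natAbs.primeFactors.filter (fun p : ℕ => ¬ (p : ℤ) ∣ A) with hS3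
  set X : ℤ := ∏ p ∈ S2, (p : ℤ) with hX
  set Y : ℤ := ∏ p ∈ S3, (p : ℤ) with hY
  have dX : ∀ p : ℕ, p.Prime → ((p : ℤ) ∣ X ↔ p ∈ S2) := by
    intro p hp
    constructor
    · intro hd
      obtain ⟨q, hq, hd⟩ := (Nat.prime_iff_prime_int.1 hp).exists_mem_finset_dvd hd
      have hqp : q.Prime := Nat.prime_of_mem_primeFactors (Finset.mem_filter.1 hq).1
      have : p = q := (Nat.prime_dvd_prime_iff_eq hp hqp).1 (by exact_mod_cast hd)
      rwa [this]
    · intro hp; exact Finset.dvd_prod_of_mem _ hp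
  have dY : ∀ p : ℕ, p.Prime → ((p : ℤ) ∣ Y ↔ p ∈ S3) := by
    intro p hp
    constructor
    · intro hd
      obtain ⟨q, hq, hd⟩ := (Nat.prime_iff_prime_int.1 hp).exists_mem_finset_dvd hd
      have hqp : q.Prime := Nat.prime_of_mem_primeFactors (Finset.mem_filter.1 hq).1
      have : p = q := (Nat.prime_dvd_prime_iff_eq hp hqp).1 (by exact_mod_cast hd)
      rwa [this]
    · intro hp; exact Finset.dvd_prod_of_mem _ hp
  have cop : ∀ x y : ℤ, (∀ p : ℕ, p.Prime → (p : ℤ) ∣ x → (p : ℤ) ∣ y → False) → IsCoprime x y := by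
    intro x y hxy
    rw [Int.isCoprime_iff_gcd_eq_one]
    by_contra hne
    obtain ⟨p, hp, hpd⟩ := Nat.exists_prime_and_dvd hne
    exact hxy p hp ((Int.natCast_dvd_natCast.2 hpd).trans (Int.gcd_dvd_left ..))
      ((Int.natCast_dvd_natCast.2 hpd).trans (Int.gcd_dvd_right ..))
  have hXY : IsCoprime X Y := by
    apply cop
    intro p hp h1 h2
    rw [dX p hp] at h1
    rw [dY p hp] at h2
    exact (Finset.mem_filter.1 h2).2 (Finset.mem_filter.1 h1).2.1
  obtain ⟨u, v, huv⟩ := hXY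
  refine ⟨⟨X, Y, -v, u⟩, ?_, ?_⟩
  · have : (⟨X, Y, -v, u⟩ : Mat2 ℤ).det = 1 := by simp only [Mat2.det]; linear_combination huv
    rw [this]; exact isUnit_one
  · apply cop
    intro p hp h1 h2
    have hpi : Prime (p : ℤ) := Nat.prime_iff_prime_int.1 hp
    have hpM : p ∈ M.natAbs.primeFactors :=
      Nat.mem_primeFactors.2 ⟨hp, Int.natCast_dvd.1 h2, by simpa using hM⟩
    simp only [qA] at h1
    have m2 : (p : ℤ) ∣ X ↔ ((p : ℤ) ∣ A ∧ ¬ (p : ℤ) ∣ C) := by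
      rw [dX p hp, hS2, Finset.mem_filter]; simp [hpM]
    have m3 : (p : ℤ) ∣ Y ↔ ¬ (p : ℤ) ∣ A := by
      rw [dY p hp, hS3, Finset.mem_filter]; simp [hpM]
    by_cases ha : (p : ℤ) ∣ A
    · have hy : ¬ (p : ℤ) ∣ Y := by rw [m3]; simpa using ha
      by_cases hc : (p : ℤ) ∣ C
      · have hx : ¬ (p : ℤ) ∣ X := by rw [m2]; tauto
        have : (p : ℤ) ∣ B * X * Y := by
          have e : B * X * Y = (A * X ^ 2 + B * X * Y + C * Y ^ 2) - A * X ^ 2 - C * Y ^ 2 := by ring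
          rw [e]
          exact dvd_sub (dvd_sub h1 (ha.mul_right _)) (hc.mul_right _)
        rcases hpi.dvd_or_dvd this with h | h
        · rcases hpi.dvd_or_dvd h with h | h
          · obtain ⟨x, y, z, hx⟩ := hprim
            have : (p : ℤ) ∣ 1 := by
              rw [← hx]
              exact dvd_add (dvd_add (ha.mul_left _) (h.mul_left _)) (hc.mul_left _)
            exact hpi.not_isUnit (isUnit_of_dvd_one this)
          · exact hx h
        · exact hy h
      · have hx : (p : ℤ) ∣ X := by rw [m2]; tauto
        have : (p : ℤ) ∣ C * Y ^ 2 := by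
          have e : C * Y ^ 2 = (A * X ^ 2 + B * X * Y + C * Y ^ 2) - X * (A * X + B * Y) := by ring
          rw [e]
          exact dvd_sub h1 (hx.mul_right _)
        rcases hpi.dvd_or_dvd this with h | h
        · exact hc h
        · exact hy (hpi.dvd_of_dvd_pow h)
    · have hy : (p : ℤ) ∣ Y := by rw [m3]; exact ha
      have hx : ¬ (p : ℤ) ∣ X := by rw [m2]; tauto
      have : (p : ℤ) ∣ A * X ^ 2 := by
        have e : A * X ^ 2 = (A * X ^ 2 + B * X * Y + C * Y ^ 2) - Y * (B * X + C * Y) := by ring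
        rw [e]
        exact dvd_sub h1 (hy.mul_right _)
      rcases hpi.dvd_or_dvd this with h | h
      · exact ha h
      · exact hx (hpi.dvd_of_dvd_pow h)


theorem Eig.param {f : BQ ℤ} {A B C t : ℤ} (h : Eig f A B C t) (hA : A ≠ 0) :
    ∃ x y : ℚ, (B : ℚ) = A * y ∧ (C : ℚ) = A * x ∧
      (f.c : ℚ) = t - 6 * f.a * x + 3 / 2 * f.b * y ∧
      (f.d : ℚ) = (t * y - 3 * f.b * x + 2 * (t - 6 * f.a * x + 3 / 2 * f.b * y) * y) / 3 ∧
      (f.e : ℚ) = (2 * t * x - 2 * (t - 6 * f.a * x + 3 / 2 * f.b * y) * x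
        + (t * y - 3 * f.b * x + 2 * (t - 6 * f.a * x + 3 / 2 * f.b * y) * y) * y) / 12 := by
  obtain ⟨h1, h2, h3⟩ := h
  have hA' : (A : ℚ) ≠ 0 := by exact_mod_cast hA
  have h1' : 12 * (f.a : ℚ) * C - 3 * f.b * B + 2 * f.c * A = 2 * t * A := by exact_mod_cast h1
  have h2' : 3 * (f.b : ℚ) * C - 2 * f.c * B + 3 * f.d * A = t * B := by exact_mod_cast h2
  have h3' : 2 * (f.c : ℚ) * C - 3 * f.d * B + 12 * f.e * A = 2 * t * C := by exact_mod_cast h3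
  obtain ⟨x, hx⟩ : ∃ x : ℚ, (C : ℚ) = A * x := ⟨C / A, by field_simp⟩
  obtain ⟨y, hy⟩ : ∃ y : ℚ, (B : ℚ) = A * y := ⟨B / A, by field_simp⟩
  rw [hx, hy] at h1' h2' h3'
  have ec : (f.c : ℚ) = t - 6 * f.a * x + 3 / 2 * f.b * y := by
    apply mul_left_cancel₀ hA'; linear_combination h1' / 2
  have ed : (f.d : ℚ) = (t * y - 3 * f.b * x + 2 * f.c * y) / 3 := by
    apply mul_left_cancel₀ hA'; linear_combination h2' / 3
  have ee : (f.e : ℚ) = (2 * t * x - 2 * f.c * x + 3 * f.d * y) / 12 := by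
    apply mul_left_cancel₀ hA'; linear_combination h3' / 12
  refine ⟨x, y, hy, hx, ec, by rw [ed, ec], ?_⟩
  rw [ee, ed, ec]; ring

def zu (f : BQ ℤ) (A B C t : ℤ) : ℤ := t * A ^ 2 + 2 * f.a * (B ^ 2 - 4 * A * C)
def zv (f : BQ ℤ) (A B : ℤ) : ℤ := f.b * A - 2 * f.a * B

theorem Eig.norm {f : BQ ℤ} {A B C t : ℤ} (h : Eig f A B C t) (hA : A ≠ 0) :
    3 * (zu f A B C t ^ 2 - (B ^ 2 - 4 * A * C) * zv f A B ^ 2) = A ^ 4 * (4 * f.invI - t ^ 2) := by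
  obtain ⟨x, y, hB, hC, hc, hd, he⟩ := h.param hA
  have : ((3 * (zu f A B C t ^ 2 - (B ^ 2 - 4 * A * C) * zv f A B ^ 2) : ℤ) : ℚ)
      = (A ^ 4 * (4 * f.invI - t ^ 2) : ℤ) := by
    simp only [zu, zv, BQ.invI]
    push_cast
    rw [hB, hC, hc, hd, he]; ring
  exact_mod_cast this

theorem Eig.skew {f g : BQ ℤ} {A B C t : ℤ} (h : Eig f A B C t) (h' : Eig g A B C t)
    (hA : A ≠ 0) (hp : Prim A B C) :
    ∃ U : ℤ, zu f A B C t * zv g A B - zu g A B C t * zv f A B = A ^ 4 * U := by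
  obtain ⟨x, y, hB, hC, hc, hd, he⟩ := h.param hA
  obtain ⟨x', y', hB', hC', hc', hd', he'⟩ := h'.param hA
  have hA' : (A : ℚ) ≠ 0 := by exact_mod_cast hA
  have ex : x' = x := by apply mul_left_cancel₀ hA'; rw [← hC, ← hC']
  have ey : y' = y := by apply mul_left_cancel₀ hA'; rw [← hB, ← hB']
  subst ex ey
  set t1 := 2 * (f.a * g.d - g.a * f.d) - (f.b * g.c - g.b * f.c) with ht1
  set t2 := 8 * (f.a * g.e - g.a * f.e) - (f.b * g.d - g.b * f.d) with ht2
  set t3 := 2 * (f.b * g.e - g.b * f.e) - (f.c * g.d - g.c * f.d) with ht3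
  have k1 : A ^ 3 * t1 = zu f A B C t * zv g A B - zu g A B C t * zv f A B := by
    have : ((A ^ 3 * t1 : ℤ) : ℚ) =
      (zu f A B C t * zv g A B - zu g A B C t * zv f A B : ℤ) := by
      simp only [zu, zv, ht1]
      push_cast
      rw [hB, hC, hc, hd, hc', hd']; ring
    exact_mod_cast this
  have k2 : t1 * B = t2 * A := by
    have : ((t1 * B : ℤ) : ℚ) = (t2 * A : ℤ) := by
      simp only [ht1, ht2]
      push_cast
      rw [hB, hc, hd, hc', hd', he, he']; ring
    exact_mod_cast this
  have k3 : t1 * C = t3 * A := by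
    have : ((t1 * C : ℤ) : ℚ) = (t3 * A : ℤ) := by
      simp only [ht1, ht3]
      push_cast
      rw [hC, hc, hd, hc', hd', he, he']; ring
    exact_mod_cast this
  obtain ⟨x, y, z, hx⟩ := hp
  refine ⟨x * t1 + y * t2 + z * t3, ?_⟩
  rw [← k1]
  linear_combination (-A ^ 3 * t1) * hx + A ^ 3 * y * k2 + A ^ 3 * z * k3

theorem Eig.disc_dvd {f : BQ ℤ} {A B C t : ℤ} (h : Eig f A B C t) (hA : A ≠ 0)
    (hp : Prim A B C) : (B ^ 2 - 4 * A * C) ∣ 24 * (f.invI - t ^ 2) := by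
  obtain ⟨x, y, hB, hC, hc, hd, he⟩ := h.param hA
  have k1 : 4 * (f.invI - t ^ 2) * A ^ 2
      = (B ^ 2 - 4 * A * C) * (8 * f.a * f.c - 3 * f.b ^ 2 + 4 * t * f.a) := by
    have : ((4 * (f.invI - t ^ 2) * A ^ 2 : ℤ) : ℚ)
      = ((B ^ 2 - 4 * A * C) * (8 * f.a * f.c - 3 * f.b ^ 2 + 4 * t * f.a) : ℤ) := by
      simp only [BQ.invI]; push_cast
      rw [hB, hC, hc, hd, he]; ring
    exact_mod_cast this
  have k2 : 4 * (f.invI - t ^ 2) * (2 * A * B)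
      = (B ^ 2 - 4 * A * C) * (24 * f.a * f.d - 4 * f.b * f.c + 4 * t * f.b) := by
    have : ((4 * (f.invI - t ^ 2) * (2 * A * B) : ℤ) : ℚ)
      = ((B ^ 2 - 4 * A * C) * (24 * f.a * f.d - 4 * f.b * f.c + 4 * t * f.b) : ℤ) := by
      simp only [BQ.invI]; push_cast
      rw [hB, hC, hc, hd, he]; ring
    exact_mod_cast this
  have k3 : 4 * (f.invI - t ^ 2) * (B ^ 2 + 2 * A * C)
      = (B ^ 2 - 4 * A * C) * (48 * f.a * f.e + 6 * f.b * f.d - 4 * f.c ^ 2 + 4 * t * f.c) := by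
    have : ((4 * (f.invI - t ^ 2) * (B ^ 2 + 2 * A * C) : ℤ) : ℚ)
      = ((B ^ 2 - 4 * A * C) * (48 * f.a * f.e + 6 * f.b * f.d - 4 * f.c ^ 2 + 4 * t * f.c) : ℤ) := by
      simp only [BQ.invI]; push_cast
      rw [hB, hC, hc, hd, he]; ring
    exact_mod_cast this
  have k4 : 4 * (f.invI - t ^ 2) * (2 * B * C)
      = (B ^ 2 - 4 * A * C) * (24 * f.b * f.e - 4 * f.c * f.d + 4 * t * f.d) := by
    have : ((4 * (f.invI - t ^ 2) * (2 * B * C) : ℤ) : ℚ)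
      = ((B ^ 2 - 4 * A * C) * (24 * f.b * f.e - 4 * f.c * f.d + 4 * t * f.d) : ℤ) := by
      simp only [BQ.invI]; push_cast
      rw [hB, hC, hc, hd, he]; ring
    exact_mod_cast this
  have k5 : 4 * (f.invI - t ^ 2) * C ^ 2
      = (B ^ 2 - 4 * A * C) * (8 * f.c * f.e - 3 * f.d ^ 2 + 4 * t * f.e) := by
    have : ((4 * (f.invI - t ^ 2) * C ^ 2 : ℤ) : ℚ)
      = ((B ^ 2 - 4 * A * C) * (8 * f.c * f.e - 3 * f.d ^ 2 + 4 * t * f.e) : ℤ) := by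
      simp only [BQ.invI]; push_cast
      rw [hB, hC, hc, hd, he]; ring
    exact_mod_cast this
  obtain ⟨x, y, z, hx⟩ := hp
  generalize 8 * f.a * f.c - 3 * f.b ^ 2 + 4 * t * f.a = g1 at *
  generalize 24 * f.a * f.d - 4 * f.b * f.c + 4 * t * f.b = g2 at *
  generalize 48 * f.a * f.e + 6 * f.b * f.d - 4 * f.c ^ 2 + 4 * t * f.c = g3 at *
  generalize 24 * f.b * f.e - 4 * f.c * f.d + 4 * t * f.d = g4 at *
  generalize 8 * f.c * f.e - 3 * f.d ^ 2 + 4 * t * f.e = g5 at *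
  generalize f.invI - t ^ 2 = W at *
  refine ⟨6 * x ^ 2 * g1 + 6 * x * y * g2 + y ^ 2 * (4 * g3 + 8 * W) + 2 * x * z * (g3 - 4 * W)
    + 6 * y * z * g4 + 6 * z ^ 2 * g5, ?_⟩
  linear_combination 6 * x ^ 2 * k1 + 6 * x * y * k2 + 4 * y ^ 2 * k3 + 2 * x * z * k3
    + 6 * y * z * k4 + 6 * z ^ 2 * k5 - 24 * W * (x * A + y * B + z * C + 1) * hx

theorem Eig.unique {f g : BQ ℤ} {A B C t : ℤ} (h : Eig f A B C t) (h' : Eig g A B C t)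
    (hA : A ≠ 0) (hD : B ^ 2 - 4 * A * C ≠ 0) (hu : zu f A B C t = zu g A B C t)
    (hv : zv f A B = zv g A B) : f = g := by
  have ha : f.a = g.a := by
    simp only [zu] at hu
    have : (f.a - g.a) * (B ^ 2 - 4 * A * C) = 0 := by linarith
    rcases mul_eq_zero.1 this with h | h
    · linarith
    · exact absurd h hD
  have hb : f.b = g.b := by
    simp only [zv, ha] at hv
    exact mul_right_cancel₀ hA (by linarith)
  obtain ⟨h1, h2, h3⟩ := h
  obtain ⟨h1', h2', h3'⟩ := h'
  rw [ha, hb] at h1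
  have hc : f.c = g.c := mul_right_cancel₀ hA (by linarith)
  rw [hb, hc] at h2
  have hd : f.d = g.d := mul_right_cancel₀ hA (by linarith)
  rw [hc, hd] at h3
  have he : f.e = g.e := mul_right_cancel₀ hA (by linarith)
  exact BQ.ext' ha hb hc hd he

def autm (A B C T U : ℤ) : Mat2 ℤ := ⟨T - B * U, 2 * A * U, -2 * C * U, T + B * U⟩

theorem autm_det {A B C T U : ℤ} (h : T ^ 2 - (B ^ 2 - 4 * A * C) * U ^ 2 = 1) :
    (autm A B C T U).det = 1 := by
  simp only [autm, Mat2.det]; linear_combination h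

theorem Eig.autm {f : BQ ℤ} {A B C t T U : ℤ} (h : Eig f A B C t)
    (hT : T ^ 2 - (B ^ 2 - 4 * A * C) * U ^ 2 = 1) : Eig (f.subst (autm A B C T U)) A B C t := by
  have h1 := h.subst_int (m := BQPaper.autm A B C T U) (by rw [autm_det hT]; exact isUnit_one)
  have e1 : qA (BQPaper.autm A B C T U) A B C = A := by
    simp only [BQPaper.autm, qA]; linear_combination A * hT
  have e2 : qB (BQPaper.autm A B C T U) A B C = B := by
    simp only [BQPaper.autm, qB]; linear_combination B * hT
  have e3 : qC (BQPaper.autm A B C T U) A B C = C := by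
    simp only [BQPaper.autm, qC]; linear_combination C * hT
  rwa [e1, e2, e3] at h1

theorem Eig.autm_zu {f : BQ ℤ} {A B C t T U : ℤ} (h : Eig f A B C t) (hA : A ≠ 0)
    (hT : T ^ 2 - (B ^ 2 - 4 * A * C) * U ^ 2 = 1) :
    zu (f.subst (BQPaper.autm A B C T U)) A B C t =
      zu f A B C t * (T ^ 4 + 6 * (B ^ 2 - 4 * A * C) * T ^ 2 * U ^ 2
        + (B ^ 2 - 4 * A * C) ^ 2 * U ^ 4)
      + (B ^ 2 - 4 * A * C) * zv f A B * (4 * T ^ 3 * U + 4 * (B ^ 2 - 4 * A * C) * T * U ^ 3) := by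
  obtain ⟨x, y, hB, hC, hc, hd, he⟩ := h.param hA
  have hT2 : t * A ^ 2 = t * A ^ 2 * (T ^ 2 - (B ^ 2 - 4 * A * C) * U ^ 2) ^ 2 := by
    rw [hT]; ring
  have : ((zu (f.subst (BQPaper.autm A B C T U)) A B C t : ℤ) : ℚ) =
      (zu f A B C t * (T ^ 4 + 6 * (B ^ 2 - 4 * A * C) * T ^ 2 * U ^ 2
        + (B ^ 2 - 4 * A * C) ^ 2 * U ^ 4)
      + (B ^ 2 - 4 * A * C) * zv f A B * (4 * T ^ 3 * U + 4 * (B ^ 2 - 4 * A * C) * T * U ^ 3) : ℤ) := by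
    rw [zu, hT2]
    simp only [zu, zv, BQPaper.autm, BQ.subst]
    push_cast
    rw [hB, hC, hc, hd, he]; ring
  exact_mod_cast this

theorem Eig.autm_zv {f : BQ ℤ} {A B C t T U : ℤ} (h : Eig f A B C t) (hA : A ≠ 0) :
    zv (f.subst (BQPaper.autm A B C T U)) A B =
      zu f A B C t * (4 * T ^ 3 * U + 4 * (B ^ 2 - 4 * A * C) * T * U ^ 3)
      + zv f A B * (T ^ 4 + 6 * (B ^ 2 - 4 * A * C) * T ^ 2 * U ^ 2
        + (B ^ 2 - 4 * A * C) ^ 2 * U ^ 4) := by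
  obtain ⟨x, y, hB, hC, hc, hd, he⟩ := h.param hA
  have : ((zv (f.subst (BQPaper.autm A B C T U)) A B : ℤ) : ℚ) =
      (zu f A B C t * (4 * T ^ 3 * U + 4 * (B ^ 2 - 4 * A * C) * T * U ^ 3)
      + zv f A B * (T ^ 4 + 6 * (B ^ 2 - 4 * A * C) * T ^ 2 * U ^ 2
        + (B ^ 2 - 4 * A * C) ^ 2 * U ^ 4) : ℤ) := by
    simp only [zu, zv, BQPaper.autm, BQ.subst]
    push_cast
    rw [hB, hC, hc, hd, he]; ring
  exact_mod_cast this


theorem pell_gen (D : ℤ) (hD : D ≠ 0) :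
    ∃ a : Pell.Solution₁ D, ∀ x : Pell.Solution₁ D, ∃ n : ℤ, x = a ^ n ∨ x = -a ^ n := by
  have triv : (∀ x : Pell.Solution₁ D, x.y = 0) →
      ∃ a : Pell.Solution₁ D, ∀ x : Pell.Solution₁ D, ∃ n : ℤ, x = a ^ n ∨ x = -a ^ n := by
    intro h
    refine ⟨1, fun x => ⟨0, ?_⟩⟩
    simpa using Pell.Solution₁.eq_one_or_neg_one_iff_y_eq_zero.2 (h x)
  rcases lt_or_gt_of_ne hD with hn | hp
  · by_cases h1 : D = -1
    · subst h1
      refine ⟨Pell.Solution₁.mk 0 1 (by norm_num), fun x => ?_⟩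
      rcases Pell.Solution₁.eq_zero_of_d_neg hn x with hx | hy
      · refine ⟨1, ?_⟩
        have := x.prop
        rw [hx] at this
        have h2 : x.y = 1 ∨ x.y = -1 := by
          have h6 : (x.y - 1) * (x.y + 1) = 0 := by linarith
          rcases mul_eq_zero.1 h6 with h | h <;> omega
        rcases h2 with h2 | h2
        · left; rw [zpow_one]; apply Pell.Solution₁.ext <;> simp [hx, h2]
        · right; rw [zpow_one]; apply Pell.Solution₁.ext <;> simp [hx, h2]
      · refine ⟨0, ?_⟩
        simpa using Pell.Solution₁.eq_one_or_neg_one_iff_y_eq_zero.2 hy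
    · apply triv
      intro x
      have := x.prop
      by_contra hy
      have h3 : 1 ≤ x.y ^ 2 := by have := sq_pos_of_ne_zero hy; omega
      nlinarith [sq_nonneg x.x, (by omega : D ≤ -2)]
  · by_cases hs : IsSquare D
    · apply triv
      intro x
      by_contra hy
      obtain ⟨r, hr⟩ := hs
      have := x.prop
      have h4 : (x.x - r * x.y) * (x.x + r * x.y) = 1 := by linear_combination this + x.y ^ 2 * hr
      have hr0 : r ≠ 0 := by rintro rfl; simp at hr; exact hD hr
      have h5 := Int.eq_of_mul_eq_one h4
      have : r * x.y = 0 := by linarith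
      rcases mul_eq_zero.1 this with h | h
      · exact hr0 h
      · exact hy h
    · obtain ⟨a, ha⟩ := Pell.IsFundamental.exists_of_not_isSquare hp hs
      exact ⟨a, fun x => ha.eq_zpow_or_neg_zpow x⟩

theorem pell_label (D : ℤ) (hD : D ≠ 0) :
    ∃ φ : Pell.Solution₁ D → Fin 8, ∀ x y, φ x = φ y → ∃ w, x = y * w ^ 4 := by
  obtain ⟨a, ha⟩ := pell_gen D hD
  have : ∀ x : Pell.Solution₁ D, ∃ p : ℤ × Fin 2, x = (-1) ^ (p.2 : ℕ) * a ^ p.1 := by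
    intro x
    obtain ⟨n, h | h⟩ := ha x
    · exact ⟨(n, 0), by simp [h]⟩
    · exact ⟨(n, 1), by simp [h]⟩
  choose p hp using this
  refine ⟨fun x => ⟨((p x).1 % 4).toNat + 4 * (p x).2, by omega⟩, fun x y h => ?_⟩
  simp only [Fin.mk.injEq] at h
  have e2 : (p x).2 = (p y).2 := by ext; omega
  have e1 : (p x).1 % 4 = (p y).1 % 4 := by omega
  obtain ⟨k, hk⟩ : ∃ k, (p x).1 = (p y).1 + k * 4 := ⟨((p x).1 - (p y).1) / 4, by omega⟩
  refine ⟨a ^ k, ?_⟩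
  rw [hp x, hp y, e2, hk, zpow_add, zpow_mul, mul_assoc]
  norm_cast



theorem dvd_cast {a b c : ℤ} (h : a ∣ b) (e : b = c) : a ∣ c := e ▸ h

theorem root_label (D : ℤ) (N : ℕ) (hN : N ≠ 0) :
    ∃ ℓ : ℤ → ℕ × ℕ, (∀ κ : ℤ, (N : ℤ) ∣ κ ^ 2 - D → (ℓ κ).1 ∣ N ∧
        ∃ h : ℕ, (ℓ κ).2 < h ∧ h ^ 2 ∣ N ∧ ((h : ℤ) ^ 2) ∣ 4 * D) ∧
      ∀ κ κ' : ℤ, (N : ℤ) ∣ κ ^ 2 - D → (N : ℤ) ∣ κ' ^ 2 - D → ℓ κ = ℓ κ' →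
        (N : ℤ) ∣ κ - κ' := by
  by_cases hex : ∃ κ0 : ℤ, (N : ℤ) ∣ κ0 ^ 2 - D
  swap
  · exact ⟨fun _ => (0, 0), fun κ h => absurd ⟨κ, h⟩ hex, fun κ _ h => absurd ⟨κ, h⟩ hex⟩
  obtain ⟨κ0, h0⟩ := hex
  let G : ℤ → ℕ := fun κ => Int.gcd (κ - κ0) N
  let Hh : ℤ → ℕ := fun κ => Nat.gcd (G κ) (N / G κ)
  have hGN : ∀ κ, G κ ∣ N := fun κ => by
    have := Int.gcd_dvd_right (κ - κ0) (N : ℤ); exact_mod_cast this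
  have hGκ : ∀ κ, (G κ : ℤ) ∣ κ - κ0 := fun κ => Int.gcd_dvd_left _ _
  have hmul : ∀ κ, (G κ) * (N / G κ) = N := fun κ => Nat.mul_div_cancel' (hGN κ)
  have hG0 : ∀ κ, G κ ≠ 0 := fun κ h => hN (by simpa [h] using hGN κ)
  have hH0 : ∀ κ, Hh κ ≠ 0 := fun κ h => hG0 κ (Nat.eq_zero_of_gcd_eq_zero_left h)
  have hlcm : ∀ κ, Hh κ * Nat.lcm (G κ) (N / G κ) = N := fun κ => by
    rw [Nat.gcd_mul_lcm, hmul]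
  have hplus : ∀ κ, (N : ℤ) ∣ κ ^ 2 - D → ((N / G κ : ℕ) : ℤ) ∣ κ + κ0 := by
    intro κ hκ
    have h1 : (N : ℤ) ∣ (κ - κ0) * (κ + κ0) := by
      have := dvd_sub hκ h0
      exact dvd_cast this (by ring)
    obtain ⟨k, hk⟩ := hGκ κ
    have hco : IsCoprime ((N / G κ : ℕ) : ℤ) k := by
      have : Int.gcd k ((N / G κ : ℕ) : ℤ) = 1 := by
        have e : (G κ) = G κ * Int.gcd k ((N / G κ : ℕ) : ℤ) := by
          have e1 : G κ = Int.gcd (κ - κ0) N := rfl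
          conv_lhs => rw [e1, hk]
          have e2 : ((N : ℕ) : ℤ) = (G κ : ℤ) * ((N / G κ : ℕ) : ℤ) := by exact_mod_cast (hmul κ).symm
          conv_lhs => rw [e2]
          rw [Int.gcd_mul_left]; simp
        have := Nat.pos_of_ne_zero (hG0 κ)
        nlinarith
      rw [Int.isCoprime_iff_gcd_eq_one, Int.gcd_comm]; exact this
    refine hco.dvd_of_dvd_mul_left (?_ : _ ∣ k * (κ + κ0))
    obtain ⟨r, hr⟩ := h1
    refine ⟨r, ?_⟩
    have hgz : (G κ : ℤ) ≠ 0 := by exact_mod_cast hG0 κ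
    apply mul_left_cancel₀ hgz
    have e2 : ((N : ℕ) : ℤ) = (G κ : ℤ) * ((N / G κ : ℕ) : ℤ) := by exact_mod_cast (hmul κ).symm
    rw [hk, e2] at hr
    linear_combination hr
  refine ⟨fun κ => (G κ, ((κ / (Nat.lcm (G κ) (N / G κ) : ℕ)) % (Hh κ : ℤ)).toNat), ?_, ?_⟩
  · intro κ hκ
    refine ⟨hGN κ, Hh κ, ?_, ?_, ?_⟩
    · have hp : (0 : ℤ) < Hh κ := by exact_mod_cast Nat.pos_of_ne_zero (hH0 κ)
      have := Int.emod_lt_of_pos (κ / (Nat.lcm (G κ) (N / G κ) : ℕ)) hp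
      have := Int.emod_nonneg (κ / (Nat.lcm (G κ) (N / G κ) : ℕ)) hp.ne'
      show Int.toNat _ < _
      omega
    · refine dvd_trans ?_ (dvd_of_eq (hmul κ)); rw [sq]
      exact mul_dvd_mul (Nat.gcd_dvd_left _ _) (Nat.gcd_dvd_right _ _)
    · have h1 : (Hh κ : ℤ) ∣ κ - κ0 :=
        (Int.natCast_dvd_natCast.2 (Nat.gcd_dvd_left _ _)).trans (hGκ κ)
      have h2 : (Hh κ : ℤ) ∣ κ + κ0 :=
        (Int.natCast_dvd_natCast.2 (Nat.gcd_dvd_right _ _)).trans (hplus κ hκ)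
      have h3 : (Hh κ : ℤ) ∣ 2 * κ0 := by
        have := dvd_sub h2 h1; exact dvd_cast this (by ring)
      have h4 : (Hh κ : ℤ) ^ 2 ∣ (2 * κ0) ^ 2 := pow_dvd_pow_of_dvd h3 2
      have h5 : (Hh κ : ℤ) ^ 2 ∣ N := by
        have : (Hh κ) ^ 2 ∣ N := by
          refine dvd_trans ?_ (dvd_of_eq (hmul κ)); rw [sq]
          exact mul_dvd_mul (Nat.gcd_dvd_left _ _) (Nat.gcd_dvd_right _ _)
        exact_mod_cast this
      have h6 := dvd_sub h4 ((h5.trans h0).mul_left 4)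
      exact dvd_cast h6 (by ring)
  · intro κ κ' hκ hκ' he
    simp only [Prod.mk.injEq] at he
    obtain ⟨hg, hj⟩ := he
    have hHe : Hh κ' = Hh κ := by show Nat.gcd _ _ = Nat.gcd _ _; rw [hg]
    rw [← hg, hHe] at hj
    set M := Nat.lcm (G κ) (N / G κ) with hM
    have hp : (0 : ℤ) < Hh κ := by exact_mod_cast Nat.pos_of_ne_zero (hH0 κ)
    have hj' : (κ / M) % (Hh κ : ℤ) = (κ' / M) % (Hh κ : ℤ) := by
      have := Int.emod_nonneg (κ / M) hp.ne'
      have := Int.emod_nonneg (κ' / M) hp.ne'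
      omega
    have hMd : (M : ℤ) ∣ κ - κ' := by
      have a1 : (G κ : ℤ) ∣ κ - κ' := by
        have := hGκ κ'; rw [← hg] at this
        have := dvd_sub (hGκ κ) this; exact dvd_cast this (by ring)
      have a2 : ((N / G κ : ℕ) : ℤ) ∣ κ - κ' := by
        have := hplus κ' hκ'; rw [← hg] at this
        have := dvd_sub (hplus κ hκ) this; exact dvd_cast this (by ring)
      have b1 := Int.natCast_dvd.1 a1
      have b2 := Int.natCast_dvd.1 a2
      exact Int.natCast_dvd.2 (Nat.lcm_dvd b1 b2)
    have hmod : κ % M = κ' % M := Int.emod_eq_emod_iff_emod_sub_eq_zero.2 (Int.emod_eq_zero_of_dvd hMd)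
    have e1 := Int.mul_ediv_add_emod κ M
    have e2 := Int.mul_ediv_add_emod κ' M
    obtain ⟨s, hs⟩ := Int.ModEq.dvd (show κ' / M ≡ κ / M [ZMOD (Hh κ)] from hj'.symm)
    have e3 : (N : ℤ) = Hh κ * M := by exact_mod_cast (hlcm κ).symm
    refine ⟨s, ?_⟩
    rw [e3]
    linear_combination (-1) * e1 + e2 + hmod + (M : ℤ) * hs

def RP (D n u v : ℤ) (c : ℕ) (κ : ℤ) : Prop :=
  c ^ 2 ∣ n.natAbs ∧ ((n.natAbs / c ^ 2 : ℕ) : ℤ) ∣ κ ^ 2 - D ∧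
    ∃ u1 v1 : ℤ, u = c * u1 ∧ v = c * v1 ∧ ((n.natAbs / c ^ 2 : ℕ) : ℤ) ∣ κ * v1 - u1

theorem exists_RP {D n u v a : ℤ} (hn : n ≠ 0) (hco : IsCoprime a n)
    (h : u ^ 2 - D * v ^ 2 = a * n) : ∃ c κ, RP D n u v c κ := by
  set c : ℕ := Nat.gcd (Int.gcd u v) n.natAbs with hc
  have hn' : n.natAbs ≠ 0 := Int.natAbs_ne_zero.2 hn
  have hc0 : c ≠ 0 := fun h => hn' (Nat.eq_zero_of_gcd_eq_zero_right h)
  have cu : (c : ℤ) ∣ u := (Int.natCast_dvd_natCast.2 (Nat.gcd_dvd_left _ _)).trans (Int.gcd_dvd_left _ _)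
  have cv : (c : ℤ) ∣ v := (Int.natCast_dvd_natCast.2 (Nat.gcd_dvd_left _ _)).trans (Int.gcd_dvd_right _ _)
  have cn : (c : ℤ) ∣ n := Int.natCast_dvd.2 (Nat.gcd_dvd_right _ _)
  obtain ⟨u1, hu1⟩ := cu
  obtain ⟨v1, hv1⟩ := cv
  have hca : IsCoprime (c : ℤ) a := (IsCoprime.of_isCoprime_of_dvd_right hco cn).symm
  have c2n : (c : ℤ) ^ 2 ∣ n := by
    refine (hca.pow_left (m := 2)).dvd_of_dvd_mul_left ?_
    rw [← h, hu1, hv1]; exact ⟨u1 ^ 2 - D * v1 ^ 2, by ring⟩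
  have c2n' : c ^ 2 ∣ n.natAbs := by
    have : ((c ^ 2 : ℕ) : ℤ) ∣ n := by exact_mod_cast c2n
    exact Int.natCast_dvd.1 this
  set N' : ℕ := n.natAbs / c ^ 2 with hN'
  have hNe : c ^ 2 * N' = n.natAbs := Nat.mul_div_cancel' c2n'
  have hcz : (c : ℤ) ≠ 0 := by exact_mod_cast hc0
  have hdv : (N' : ℤ) ∣ u1 ^ 2 - D * v1 ^ 2 := by
    have : ((c : ℤ) ^ 2 * N') ∣ (c : ℤ) ^ 2 * (u1 ^ 2 - D * v1 ^ 2) := by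
      have e : (c : ℤ) ^ 2 * N' = |n| := by
        rw [Int.abs_eq_natAbs, ← hNe]; push_cast; ring
      rw [e, abs_dvd]
      refine ⟨a, ?_⟩
      rw [hu1, hv1] at h; linear_combination h
    exact (mul_dvd_mul_iff_left (pow_ne_zero 2 hcz)).1 this
  have hcop : IsCoprime v1 (N' : ℤ) := by
    rw [Int.isCoprime_iff_gcd_eq_one]
    by_contra hne
    obtain ⟨p, hp, hpd⟩ := Nat.exists_prime_and_dvd hne
    have p1 : (p : ℤ) ∣ v1 := (Int.natCast_dvd_natCast.2 hpd).trans (Int.gcd_dvd_left _ _)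
    have p2 : (p : ℤ) ∣ (N' : ℤ) := (Int.natCast_dvd_natCast.2 hpd).trans (Int.gcd_dvd_right _ _)
    have p3 : (p : ℤ) ∣ u1 := by
      have : (p : ℤ) ∣ u1 ^ 2 := by
        have := dvd_add (p2.trans hdv) ((dvd_pow p1 two_ne_zero).mul_left D)
        exact dvd_cast this (by ring)
      exact (Nat.prime_iff_prime_int.1 hp).dvd_of_dvd_pow this
    have q : c * p ∣ c := by
      nth_rewrite 2 [hc]
      refine Nat.dvd_gcd ?_ ?_
      · refine Int.dvd_gcd ?_ ?_
        · rw [hu1]; push_cast; exact mul_dvd_mul_left _ p3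
        · rw [hv1]; push_cast; exact mul_dvd_mul_left _ p1
      · rw [← hNe, sq, mul_assoc]
        exact mul_dvd_mul_left _ ((by exact_mod_cast p2 : p ∣ N').mul_left _)
    have := Nat.le_of_dvd (Nat.pos_of_ne_zero hc0) q
    have := hp.two_le
    have := Nat.pos_of_ne_zero hc0
    nlinarith
  obtain ⟨s, r, hsr⟩ := id hcop
  have hk : (N' : ℤ) ∣ (u1 * s) * v1 - u1 := ⟨-u1 * r, by linear_combination u1 * hsr⟩
  refine ⟨c, u1 * s, c2n', ?_, u1, v1, hu1, hv1, hk⟩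
  have h1 : (N' : ℤ) ∣ ((u1 * s) ^ 2 - D) * v1 ^ 2 := by
    have := dvd_add hdv (hk.mul_right ((u1 * s) * v1 + u1))
    exact dvd_cast this (by ring)
  exact (hcop.symm.pow_right (n := 2)).dvd_of_dvd_mul_right h1

theorem rep_label (D n : ℤ) (hn : n ≠ 0) :
    ∃ ℓ : ℤ × ℤ → ℕ × ℕ × ℕ,
      (∀ a u v, IsCoprime a n → u ^ 2 - D * v ^ 2 = a * n →
        (ℓ (u, v)).1 ∣ n.natAbs ∧ (ℓ (u, v)).2.1 ∣ n.natAbs ∧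
        ∃ h : ℕ, (ℓ (u, v)).2.2 < h ∧ (h : ℤ) ^ 2 ∣ n ∧ (h : ℤ) ^ 2 ∣ 4 * D) ∧
      ∀ a u v u' v', IsCoprime a n → u ^ 2 - D * v ^ 2 = a * n →
        u' ^ 2 - D * v' ^ 2 = a * n → ℓ (u, v) = ℓ (u', v') → n ∣ u * v' - u' * v := by
  classical
  have hn' : n.natAbs ≠ 0 := Int.natAbs_ne_zero.2 hn
  have H : ∀ p : ℤ × ℤ, ∃ q : ℕ × ℤ, (∃ c κ, RP D n p.1 p.2 c κ) → RP D n p.1 p.2 q.1 q.2 := by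
    intro p
    by_cases h : ∃ c κ, RP D n p.1 p.2 c κ
    · obtain ⟨c, κ, h⟩ := h; exact ⟨(c, κ), fun _ => h⟩
    · exact ⟨(0, 0), fun h' => absurd h' h⟩
  choose q hq using H
  have R : ∀ N : ℕ, ∃ ℓ : ℤ → ℕ × ℕ, N ≠ 0 → (∀ κ : ℤ, (N : ℤ) ∣ κ ^ 2 - D → (ℓ κ).1 ∣ N ∧
        ∃ h : ℕ, (ℓ κ).2 < h ∧ h ^ 2 ∣ N ∧ ((h : ℤ) ^ 2) ∣ 4 * D) ∧
      ∀ κ κ' : ℤ, (N : ℤ) ∣ κ ^ 2 - D → (N : ℤ) ∣ κ' ^ 2 - D → ℓ κ = ℓ κ' →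
        (N : ℤ) ∣ κ - κ' := by
    intro N
    by_cases h : N = 0
    · exact ⟨fun _ => (0, 0), fun h' => absurd h h'⟩
    · obtain ⟨ℓ, hℓ⟩ := root_label D N h; exact ⟨ℓ, fun _ => hℓ⟩
  choose L hL using R
  have hN0 : ∀ c : ℕ, c ^ 2 ∣ n.natAbs → n.natAbs / c ^ 2 ≠ 0 := by
    intro c hc h
    have := Nat.mul_div_cancel' hc
    rw [h] at this; omega
  refine ⟨fun p => ((q p).1, L (n.natAbs / (q p).1 ^ 2) (q p).2), ?_, ?_⟩
  · intro a u v hco h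
    obtain ⟨h1, h2, u1, v1, h3⟩ := hq (u, v) (exists_RP hn hco h)
    obtain ⟨k1, hh, k2, k3, k4⟩ := (hL _ (hN0 _ h1)).1 _ h2
    refine ⟨(Dvd.intro_left _ (by rw [sq] : _ * _ = _)).trans h1, k1.trans (Nat.div_dvd_of_dvd h1), hh, k2, ?_, k4⟩
    have : ((hh ^ 2 : ℕ) : ℤ) ∣ n := Int.natCast_dvd.2 (k3.trans (Nat.div_dvd_of_dvd h1))
    exact_mod_cast this
  · intro a u v u' v' hco h h' he
    simp only [Prod.mk.injEq] at he
    obtain ⟨ec, el⟩ := he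
    obtain ⟨h1, h2, u1, v1, h3, h4, h5⟩ := hq (u, v) (exists_RP hn hco h)
    obtain ⟨h1', h2', u1', v1', h3', h4', h5'⟩ := hq (u', v') (exists_RP hn hco h')
    rw [← ec] at h1' h2' h3' h4' h5' el
    have := (hL _ (hN0 _ h1)).2 _ _ h2 h2' el
    have hh : ((n.natAbs / (q (u, v)).1 ^ 2 : ℕ) : ℤ) ∣ u1 * v1' - u1' * v1 := by
      have := dvd_add (dvd_sub (this.mul_right (v1 * v1')) (h5.mul_right v1')) (h5'.mul_right v1)
      exact dvd_cast this (by ring)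
    have e : (((q (u, v)).1 : ℤ) ^ 2 * ((n.natAbs / (q (u, v)).1 ^ 2 : ℕ) : ℤ)) = |n| := by
      rw [Int.abs_eq_natAbs]; exact_mod_cast Nat.mul_div_cancel' h1
    rw [← abs_dvd, ← e]
    have := mul_dvd_mul_left (((q (u, v)).1 : ℤ) ^ 2) hh
    refine dvd_cast this ?_
    simp only at h3 h4 h3' h4'
    generalize ((q (u, v)).1 : ℤ) = cc at *
    rw [h3, h4, h3', h4']; ring



theorem ratio {D n a u v u' v' U0 : ℤ} (hn : n ≠ 0) (ha : a ≠ 0) (hco : IsCoprime a n)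
    (h : u ^ 2 - D * v ^ 2 = a * n) (h' : u' ^ 2 - D * v' ^ 2 = a * n)
    (hU : u * v' - u' * v = a * U0) (hd : n ∣ u * v' - u' * v) :
    ∃ η : Pell.Solution₁ D, u' = u * η.x + D * v * η.y ∧ v' = u * η.y + v * η.x := by
  rw [hU] at hd
  obtain ⟨U, rfl⟩ := hco.symm.dvd_of_dvd_mul_left hd
  have han : a * n ≠ 0 := mul_ne_zero ha hn
  have hW : (a * n) ^ 2 ∣ (u * u' - D * v * v') ^ 2 := by
    refine ⟨1 + D * U ^ 2, ?_⟩
    have e : (u * u' - D * v * v') ^ 2 - D * (u * v' - u' * v) ^ 2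
      = (u ^ 2 - D * v ^ 2) * (u' ^ 2 - D * v' ^ 2) := by ring
    rw [h, h', hU] at e
    linear_combination e
  obtain ⟨T, hT⟩ := (Int.pow_dvd_pow_iff two_ne_zero).1 hW
  have hTU : T ^ 2 - D * U ^ 2 = 1 := by
    have e : (u * u' - D * v * v') ^ 2 - D * (u * v' - u' * v) ^ 2
      = (u ^ 2 - D * v ^ 2) * (u' ^ 2 - D * v' ^ 2) := by ring
    rw [h, h', hU, hT] at e
    apply mul_left_cancel₀ (pow_ne_zero 2 han)
    linear_combination e
  refine ⟨Pell.Solution₁.mk T U hTU, ?_, ?_⟩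
  · apply mul_left_cancel₀ han
    simp only [Pell.Solution₁.x_mk, Pell.Solution₁.y_mk]
    linear_combination (-u') * h + u * hT + D * v * hU
  · apply mul_left_cancel₀ han
    simp only [Pell.Solution₁.x_mk, Pell.Solution₁.y_mk]
    linear_combination (-v') * h + v * hT + u * hU

theorem per_label {A B C t n : ℤ} (hA : A ≠ 0) (hco : IsCoprime A n) (hp : Prim A B C)
    (hD : B ^ 2 - 4 * A * C ≠ 0) (hn : n ≠ 0) :
    ∃ L : BQ ℤ → (ℕ × ℕ × ℕ) × Fin 8,
      (∀ f, Eig f A B C t → 4 * f.invI - t ^ 2 = 3 * n →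
        (L f).1.1 ∣ n.natAbs ∧ (L f).1.2.1 ∣ n.natAbs ∧
        ∃ h : ℕ, (L f).1.2.2 < h ∧ (h : ℤ) ^ 2 ∣ n ∧ (h : ℤ) ^ 2 ∣ 4 * (B ^ 2 - 4 * A * C)) ∧
      ∀ f g, Eig f A B C t → 4 * f.invI - t ^ 2 = 3 * n → Eig g A B C t →
        4 * g.invI - t ^ 2 = 3 * n → L f = L g → IntEquiv f g := by
  classical
  obtain ⟨D, hDdef⟩ : ∃ D, D = B ^ 2 - 4 * A * C := ⟨_, rfl⟩
  have hD2 := hD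
  rw [← hDdef] at hD2
  obtain ⟨ℓ, hℓ1, hℓ2⟩ := rep_label D n hn
  obtain ⟨φ, hφ⟩ := pell_label D hD2
  have hco4 : IsCoprime (A ^ 4) n := hco.pow_left
  have hA4 : A ^ 4 ≠ 0 := pow_ne_zero 4 hA
  have hnorm : ∀ f, Eig f A B C t → 4 * f.invI - t ^ 2 = 3 * n →
      zu f A B C t ^ 2 - D * zv f A B ^ 2 = A ^ 4 * n := by
    intro f hf hfn
    have := hf.norm hA
    rw [hfn, ← hDdef] at this
    linarith
  let Good : BQ ℤ → Prop := fun f => Eig f A B C t ∧ 4 * f.invI - t ^ 2 = 3 * n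
  let lab : BQ ℤ → ℕ × ℕ × ℕ := fun f => ℓ (zu f A B C t, zv f A B)
  have hbase : ∀ l, ∃ f0, (∃ f, Good f ∧ lab f = l) → Good f0 ∧ lab f0 = l := by
    intro l
    by_cases h : ∃ f, Good f ∧ lab f = l
    · obtain ⟨f, hf⟩ := h; exact ⟨f, fun _ => hf⟩
    · exact ⟨⟨0, 0, 0, 0, 0⟩, fun h' => absurd h' h⟩
  choose f0 hf0 using hbase
  have heta : ∀ f, ∃ η : Pell.Solution₁ D, Good f →
      zu f A B C t = zu (f0 (lab f)) A B C t * η.x + D * zv (f0 (lab f)) A B * η.y ∧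
      zv f A B = zu (f0 (lab f)) A B C t * η.y + zv (f0 (lab f)) A B * η.x := by
    intro f
    by_cases hf : Good f
    · obtain ⟨hg, hl⟩ := hf0 (lab f) ⟨f, hf, rfl⟩
      obtain ⟨U0, hU0⟩ := hg.1.skew hf.1 hA hp
      obtain ⟨η, hη⟩ := ratio hn hA4 hco4 (hnorm _ hg.1 hg.2) (hnorm _ hf.1 hf.2) hU0
        (hℓ2 _ _ _ _ _ hco4 (hnorm _ hg.1 hg.2) (hnorm _ hf.1 hf.2) hl)
      exact ⟨η, fun _ => hη⟩
    · exact ⟨1, fun h => absurd h hf⟩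
  choose η hη using heta
  refine ⟨fun f => (lab f, φ (η f)), fun f h1 h2 => by rw [← hDdef]; exact hℓ1 _ _ _ hco4 (hnorm f h1 h2), ?_⟩
  intro f g hf hfn hg hgn he
  simp only [Prod.mk.injEq] at he
  obtain ⟨el, ep⟩ := he
  obtain ⟨w, hw⟩ := hφ _ _ ep.symm
  obtain ⟨fu, fv⟩ := hη f ⟨hf, hfn⟩
  obtain ⟨gu, gv⟩ := hη g ⟨hg, hgn⟩
  rw [← el] at gu gv
  have hwp : w.x ^ 2 - (B ^ 2 - 4 * A * C) * w.y ^ 2 = 1 := by rw [← hDdef]; exact w.prop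
  refine ⟨autm A B C w.x w.y, by rw [autm_det hwp]; exact isUnit_one, ?_⟩
  have w2 : w ^ 4 = (w * w) * (w * w) := by rw [← pow_two, ← pow_two, ← pow_mul]
  have ex : (η g).x = (η f).x * (w.x ^ 4 + 6 * D * w.x ^ 2 * w.y ^ 2 + D ^ 2 * w.y ^ 4)
      + D * ((η f).y * (4 * w.x ^ 3 * w.y + 4 * D * w.x * w.y ^ 3)) := by
    rw [hw, w2]; simp only [Pell.Solution₁.x_mul, Pell.Solution₁.y_mul]; ring
  have ey : (η g).y = (η f).x * (4 * w.x ^ 3 * w.y + 4 * D * w.x * w.y ^ 3) +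
      (η f).y * (w.x ^ 4 + 6 * D * w.x ^ 2 * w.y ^ 2 + D ^ 2 * w.y ^ 4) := by
    rw [hw, w2]; simp only [Pell.Solution₁.x_mul, Pell.Solution₁.y_mul]; ring
  refine (hg).unique (hf.autm hwp) hA hD ?_ ?_
  · rw [hf.autm_zu hA hwp, ← hDdef, gu, fu, fv, ex, ey]; ring
  · rw [hf.autm_zv hA, ← hDdef, gv, fu, fv, ex, ey]; ring



theorem divisor_bound (δ : ℝ) (hδ : 0 < δ) :
    ∃ C : ℝ, 1 ≤ C ∧ ∀ m : ℕ, m ≠ 0 → (m.divisors.card : ℝ) ≤ C * (m : ℝ) ^ δ := by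
  have hl2 : 0 < Real.log 2 := Real.log_pos (by norm_num)
  set C1 : ℝ := 1 + 1 / (δ * Real.log 2) with hC1
  have hC1' : 1 ≤ C1 := by rw [hC1]; have : 0 < 1 / (δ * Real.log 2) := by positivity
                           linarith
  set P : ℕ := ⌈(2 : ℝ) ^ (1 / δ)⌉₊ with hP
  refine ⟨C1 ^ P, one_le_pow₀ hC1', fun m hm => ?_⟩
  have key : ∀ p : ℕ, 2 ≤ p → ∀ k : ℕ,
      ((k : ℝ) + 1) ≤ (if p < P then C1 else 1) * ((p : ℝ) ^ δ) ^ k := by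
    intro p hp k
    have hp' : (2 : ℝ) ≤ p := by exact_mod_cast hp
    split_ifs with h
    · have h1 : (2 : ℝ) ^ δ ≤ (p : ℝ) ^ δ := Real.rpow_le_rpow (by norm_num) hp' hδ.le
      have h2 : ((2 : ℝ) ^ δ) ^ k ≤ ((p : ℝ) ^ δ) ^ k := pow_le_pow_left₀ (by positivity) h1 k
      have h3 : 1 + k * (δ * Real.log 2) ≤ ((2 : ℝ) ^ δ) ^ k := by
        rw [Real.rpow_def_of_pos (by norm_num), ← Real.exp_nat_mul]
        have := Real.add_one_le_exp (k * (Real.log 2 * δ))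
        linarith
      have h4 : (k : ℝ) + 1 ≤ C1 * (1 + k * (δ * Real.log 2)) := by
        have : C1 * (1 + k * (δ * Real.log 2)) =
          1 + k * (δ * Real.log 2) + 1 / (δ * Real.log 2) + k := by
          rw [hC1]; field_simp; ring
        rw [this]
        have : 0 < 1 / (δ * Real.log 2) := by positivity
        have : 0 ≤ k * (δ * Real.log 2) := by positivity
        linarith
      calc (k : ℝ) + 1 ≤ C1 * (1 + k * (δ * Real.log 2)) := h4
        _ ≤ C1 * ((p : ℝ) ^ δ) ^ k := by gcongr; exact h3.trans h2
    · have h0 : (2 : ℝ) ^ (1 / δ) ≤ p := by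
        have := Nat.le_ceil ((2 : ℝ) ^ (1 / δ))
        have h5 : (P : ℝ) ≤ p := by exact_mod_cast not_lt.1 h
        linarith
      have h1 : (2 : ℝ) ≤ (p : ℝ) ^ δ := by
        have := Real.rpow_le_rpow (by positivity) h0 hδ.le
        rwa [← Real.rpow_mul (by norm_num), one_div_mul_cancel hδ.ne', Real.rpow_one] at this
      have h2 : (2 : ℝ) ^ k ≤ ((p : ℝ) ^ δ) ^ k := pow_le_pow_left₀ (by norm_num) h1 k
      have h3 : (k : ℝ) + 1 ≤ 2 ^ k := by exact_mod_cast Nat.succ_le_of_lt Nat.lt_two_pow_self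
      linarith
  rw [Nat.card_divisors hm]
  push_cast
  have e : (m : ℝ) ^ δ = ∏ p ∈ m.primeFactors, ((p : ℝ) ^ δ) ^ (m.factorization p) := by
    have h1 : (m : ℝ) = ∏ p ∈ m.primeFactors, (p : ℝ) ^ (m.factorization p) := by
      conv_lhs => rw [← Nat.prod_factorization_pow_eq_self hm]
      rw [Finsupp.prod]; push_cast; rfl
    conv_lhs => rw [h1]
    rw [← Real.finsetProd_rpow _ _ (fun i _ => by positivity)]
    refine Finset.prod_congr rfl fun p _ => ?_
    rw [← Real.rpow_natCast, ← Real.rpow_natCast, ← Real.rpow_mul (by positivity),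
      ← Real.rpow_mul (by positivity), mul_comm]
  calc ∏ p ∈ m.primeFactors, ((m.factorization p : ℝ) + 1)
      ≤ ∏ p ∈ m.primeFactors, ((if p < P then C1 else 1) * ((p : ℝ) ^ δ) ^ (m.factorization p)) := by
        apply Finset.prod_le_prod
        · intros; positivity
        · intro p hp; exact key p (Nat.prime_of_mem_primeFactors hp).two_le _
    _ = (∏ p ∈ m.primeFactors, (if p < P then C1 else 1)) * (m : ℝ) ^ δ := by
        rw [Finset.prod_mul_distrib, e]
    _ ≤ C1 ^ P * (m : ℝ) ^ δ := by
        gcongr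
        rw [← Finset.prod_filter, Finset.prod_const]
        apply pow_le_pow_right₀ hC1'
        calc _ ≤ (Finset.range P).card := Finset.card_le_card (by intro p; simp)
          _ = P := by simp



abbrev Lab : Type := Σ _ : ℤ × ℤ, (ℤ × ℤ × ℤ) × (ℕ × ℕ) × (Σ _ : ℕ, ℕ) × Fin 8

def GoodLab (I J t A B C : ℤ) (c g h j : ℕ) : Prop :=
  t ^ 3 = 3 * I * t + J ∧ B ^ 2 - 4 * A * C ≠ 0 ∧ Red A B C ∧
  B ^ 2 - 4 * A * C ∣ 24 * (I - t ^ 2) ∧ I - t ^ 2 ≠ 0 ∧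
  4 * I - t ^ 2 = 3 * ((4 * I - t ^ 2) / 3) ∧ (4 * I - t ^ 2) / 3 ≠ 0 ∧
  c ∣ ((4 * I - t ^ 2) / 3).natAbs ∧ g ∣ ((4 * I - t ^ 2) / 3).natAbs ∧
  j < h ∧ (h : ℤ) ^ 2 ∣ (4 * I - t ^ 2) / 3 ∧ (h : ℤ) ^ 2 ∣ 288 * I

theorem three_dvd (f : BQ ℤ) (t : ℤ) (h : t ^ 3 = 3 * f.invI * t + f.invJ) :
    (3 : ℤ) ∣ 4 * f.invI - t ^ 2 := by
  have h1 : (3 : ℤ) ∣ (t - f.c) ^ 3 := by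
    refine ⟨f.invI * t + (24 * f.a * f.c * f.e + 3 * f.b * f.c * f.d - 9 * f.a * f.d ^ 2
      - 9 * f.e * f.b ^ 2 - f.c ^ 3) - t * f.c * (t - f.c), ?_⟩
    have : f.invJ = 72 * f.a * f.c * f.e + 9 * f.b * f.c * f.d - 27 * f.a * f.d ^ 2
      - 27 * f.e * f.b ^ 2 - 2 * f.c ^ 3 := rfl
    rw [this] at h
    linear_combination h
  obtain ⟨k, hk⟩ := Int.prime_three.dvd_of_dvd_pow h1
  have ht : t = f.c + 3 * k := by linarith
  refine ⟨4 * (4 * f.a * f.e - f.b * f.d) + f.c ^ 2 - 2 * f.c * k - 3 * k ^ 2, ?_⟩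
  rw [ht]; simp only [BQ.invI]; ring

abbrev SF : Type := {f : BQ ℤ // f.disc ≠ 0 ∧ NontrivialStab f}

theorem full_label : ∃ Λ : SF → Lab, (∀ f : SF, (Λ f).1.1 = f.1.invI ∧
      GoodLab f.1.invI f.1.invJ (Λ f).1.2 (Λ f).2.1.1 (Λ f).2.1.2.1 (Λ f).2.1.2.2
        (Λ f).2.2.1.1 (Λ f).2.2.1.2 (Λ f).2.2.2.1.1 (Λ f).2.2.2.1.2) ∧
      ∀ f g : SF, Λ f = Λ g → IntEquiv f.1 g.1 := by
  classical
  have s1 : ∀ f : SF, ∃ (m : Mat2 ℤ) (A B C t : ℤ), IsUnit m.det ∧ B ^ 2 - 4 * A * C ≠ 0 ∧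
      Prim A B C ∧ Red A B C ∧ Eig (f.1.subst m) A B C t := by
    rintro ⟨f, hd, hs⟩
    obtain ⟨A, B, C, t, hD, hp, he⟩ := stepB f hd hs
    obtain ⟨m, hm, hr⟩ := reduce A B C hD
    exact ⟨m, _, _, _, t, hm, by rwa [qdisc_int hm], hp.subst hm, hr, he.subst_int hm⟩
  choose m A B C t hm hD hp hr he using s1
  have s2 : ∀ A B C n : ℤ, ∃ k : Mat2 ℤ, Prim A B C → n ≠ 0 →
      IsUnit k.det ∧ IsCoprime (qA k A B C) (2 * n) := by
    intro A B C n
    by_cases h : Prim A B C ∧ n ≠ 0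
    · obtain ⟨k, hk⟩ := exists_coprime_value h.1 (M := 2 * n) (by simpa using h.2)
      exact ⟨k, fun _ _ => hk⟩
    · exact ⟨⟨0, 0, 0, 0⟩, fun h1 h2 => absurd ⟨h1, h2⟩ h⟩
  choose K hK using s2
  have s3 : ∀ A B C t n : ℤ, ∃ L : BQ ℤ → (ℕ × ℕ × ℕ) × Fin 8,
      A ≠ 0 → IsCoprime A n → Prim A B C → B ^ 2 - 4 * A * C ≠ 0 → n ≠ 0 →
      (∀ f, Eig f A B C t → 4 * f.invI - t ^ 2 = 3 * n →
        (L f).1.1 ∣ n.natAbs ∧ (L f).1.2.1 ∣ n.natAbs ∧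
        ∃ h : ℕ, (L f).1.2.2 < h ∧ (h : ℤ) ^ 2 ∣ n ∧ (h : ℤ) ^ 2 ∣ 4 * (B ^ 2 - 4 * A * C)) ∧
      ∀ f g, Eig f A B C t → 4 * f.invI - t ^ 2 = 3 * n → Eig g A B C t →
        4 * g.invI - t ^ 2 = 3 * n → L f = L g → IntEquiv f g := by
    intro A B C t n
    by_cases h : A ≠ 0 ∧ IsCoprime A n ∧ Prim A B C ∧ B ^ 2 - 4 * A * C ≠ 0 ∧ n ≠ 0
    · obtain ⟨h1, h2, h3, h4, h5⟩ := h
      obtain ⟨L, hL⟩ := per_label (t := t) h1 h2 h3 h4 h5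
      exact ⟨L, fun _ _ _ _ _ => hL⟩
    · exact ⟨fun _ => ((0, 0, 0), 0), fun h1 h2 h3 h4 h5 => absurd ⟨h1, h2, h3, h4, h5⟩ h⟩
  choose L hL using s3
  let n : SF → ℤ := fun f => (4 * f.1.invI - t f ^ 2) / 3
  have hI1 : ∀ f : SF, (f.1.subst (m f)).invI = f.1.invI := fun f =>
    IntEquiv.invI_eq ⟨m f, hm f, rfl⟩
  have hJ1 : ∀ f : SF, (f.1.subst (m f)).invJ = f.1.invJ := fun f =>
    IntEquiv.invJ_eq ⟨m f, hm f, rfl⟩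
  have hcub : ∀ f : SF, t f ^ 3 = 3 * f.1.invI * t f + f.1.invJ := fun f => by
    have := (he f).cubic (hp f); rwa [hI1, hJ1] at this
  have hn3 : ∀ f : SF, 4 * f.1.invI - t f ^ 2 = 3 * n f := fun f =>
    (Int.mul_ediv_cancel' (three_dvd f.1 _ (hcub f))).symm
  have hdisc : ∀ f : SF, 27 * f.1.disc = (4 * f.1.invI - t f ^ 2) * (f.1.invI - t f ^ 2) ^ 2 := by
    intro f
    have hJ : f.1.invJ = t f ^ 3 - 3 * f.1.invI * t f := by linarith [hcub f]
    rw [disc_eq, hJ]; ring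
  have hn0 : ∀ f : SF, n f ≠ 0 := by
    intro f h
    have := hdisc f; rw [hn3, h] at this
    exact f.2.1 (by linarith)
  have hIt : ∀ f : SF, f.1.invI - t f ^ 2 ≠ 0 := by
    intro f h
    have := hdisc f; rw [h] at this
    exact f.2.1 (by linarith)
  let k : SF → Mat2 ℤ := fun f => K (A f) (B f) (C f) (n f)
  have hk : ∀ f : SF, IsUnit (k f).det := fun f => (hK _ _ _ _ (hp f) (hn0 f)).1
  have hkc : ∀ f : SF, IsCoprime (qA (k f) (A f) (B f) (C f)) (2 * n f) :=
    fun f => (hK _ _ _ _ (hp f) (hn0 f)).2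
  have hA' : ∀ f : SF, qA (k f) (A f) (B f) (C f) ≠ 0 := by
    intro f h
    have := hkc f
    rw [h, isCoprime_zero_left] at this
    have := isUnit_of_mul_isUnit_left this
    exact absurd this (by decide)
  have hkc' : ∀ f : SF, IsCoprime (qA (k f) (A f) (B f) (C f)) (n f) :=
    fun f => IsCoprime.of_mul_right_right (hkc f)
  let f2 : SF → BQ ℤ := fun f => (f.1.subst (m f)).subst (k f)
  have hI2 : ∀ f : SF, (f2 f).invI = f.1.invI := fun f =>
    (IntEquiv.invI_eq ⟨k f, hk f, rfl⟩).trans (hI1 f)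
  have he2 : ∀ f : SF, Eig (f2 f) (qA (k f) (A f) (B f) (C f)) (qB (k f) (A f) (B f) (C f))
      (qC (k f) (A f) (B f) (C f)) (t f) := fun f => (he f).subst_int (hk f)
  let l : SF → (ℕ × ℕ × ℕ) × Fin 8 := fun f =>
    L (qA (k f) (A f) (B f) (C f)) (qB (k f) (A f) (B f) (C f))
      (qC (k f) (A f) (B f) (C f)) (t f) (n f) (f2 f)
  have hLf := fun f : SF => hL (qA (k f) (A f) (B f) (C f)) (qB (k f) (A f) (B f) (C f))
      (qC (k f) (A f) (B f) (C f)) (t f) (n f) (hA' f) (hkc' f) ((hp f).subst (hk f))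
      (by rw [qdisc_int (hk f)]; exact hD f) (hn0 f)
  have hl1 := fun f : SF => (hLf f).1 (f2 f) (he2 f) (by rw [hI2]; exact hn3 f)
  have hDd : ∀ f : SF, (B f) ^ 2 - 4 * A f * C f ∣ 24 * (f.1.invI - t f ^ 2) := by
    intro f
    have := (he2 f).disc_dvd (hA' f) ((hp f).subst (hk f))
    rwa [qdisc_int (hk f), hI2] at this
  choose hc hg h hj hhn hhD using hl1
  refine ⟨fun f => ⟨(f.1.invI, t f), (A f, B f, C f), ((l f).1.1, (l f).1.2.1),
    ⟨h f, (l f).1.2.2⟩, (l f).2⟩, ?_, ?_⟩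
  · intro f
    refine ⟨rfl, hcub f, hD f, hr f, hDd f, hIt f, hn3 f, hn0 f, hc f, hg f, hj f, hhn f, ?_⟩
    have a1 : (h f : ℤ) ^ 2 ∣ 96 * (f.1.invI - t f ^ 2) := by
      have := hhD f
      rw [qdisc_int (hk f)] at this
      exact dvd_cast (this.trans (mul_dvd_mul_left 4 (hDd f))) (by ring)
    have a2 : (h f : ℤ) ^ 2 ∣ 96 * (4 * f.1.invI - t f ^ 2) := by
      rw [hn3]; exact ((hhn f).mul_left 3).mul_left 96
    exact dvd_cast (dvd_sub a2 a1) (by ring)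
  · intro f g hfg
    simp only [Sigma.mk.injEq, Prod.mk.injEq, heq_eq_eq] at hfg
    obtain ⟨⟨eI, et⟩, ⟨eA, eB, eC⟩, ⟨ec, eg⟩, ⟨eh, ej⟩, e8⟩ := hfg
    have el : l f = l g := Prod.ext (Prod.ext ec (Prod.ext eg ej)) e8
    have en : n f = n g := by
      have h1 := hn3 f
      have h2 := hn3 g
      rw [eI, et] at h1; linarith
    have ek : k f = k g := by
      show K _ _ _ _ = K _ _ _ _
      rw [eA, eB, eC, en]
    have h2 := he2 g
    have el2 : l g = L (qA (k f) (A f) (B f) (C f)) (qB (k f) (A f) (B f) (C f))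
      (qC (k f) (A f) (B f) (C f)) (t f) (n f) (f2 g) := by
      rw [ek, eA, eB, eC, et, en]
    rw [← ek, ← eA, ← eB, ← eC, ← et] at h2
    have hE : IntEquiv (f2 f) (f2 g) := (hLf f).2 (f2 f) (f2 g) (he2 f) (by rw [hI2]; exact hn3 f) h2
      (by rw [hI2, ← eI]; exact hn3 f) (el.trans el2)
    have i1 : ∀ f : SF, IntEquiv f.1 (f2 f) := fun f =>
      IntEquiv.trans ⟨m f, hm f, rfl⟩ ⟨k f, hk f, rfl⟩
    exact (i1 f).trans (hE.trans (i1 g).symm)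



def sdiv (m : ℕ) : Finset ℤ :=
  m.divisors.image (fun d : ℕ => (d : ℤ)) ∪ m.divisors.image (fun d : ℕ => -(d : ℤ))

theorem mem_sdiv {m : ℕ} {z : ℤ} : z ∈ sdiv m ↔ z.natAbs ∣ m ∧ m ≠ 0 := by
  simp only [sdiv, Finset.mem_union, Finset.mem_image, Nat.mem_divisors]
  constructor
  · rintro (⟨d, h, rfl⟩ | ⟨d, h, rfl⟩) <;> simpa using h
  · intro h
    rcases Int.natAbs_eq z with hz | hz
    · left; exact ⟨z.natAbs, h, hz.symm⟩
    · right; exact ⟨z.natAbs, h, hz.symm⟩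

theorem card_sdiv (m : ℕ) : (sdiv m).card ≤ 2 * m.divisors.card := by
  refine (Finset.card_union_le _ _).trans ?_
  have h1 := Finset.card_image_le (s := m.divisors) (f := fun d : ℕ => (d : ℤ))
  have h2 := Finset.card_image_le (s := m.divisors) (f := fun d : ℕ => -(d : ℤ))
  omega

def QS (K R : ℕ) : Finset (ℤ × ℤ × ℤ) :=
  ((sdiv R ×ˢ Finset.Icc (-(K : ℤ)) K).biUnion fun p =>
    (sdiv ((p.2 ^ 2 - p.1) / 4).natAbs).image fun A => (A, p.2, ((p.2 ^ 2 - p.1) / 4) / A))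
  ∪ (sdiv R ×ˢ Finset.Icc (-(K : ℤ)) K).image fun p => (0, p.1, p.2)

theorem card_QS {K R E : ℕ} (hE1 : 1 ≤ E) (hE : ∀ m ≤ 50 * K ^ 2, m.divisors.card ≤ E)
    (hR : R ≤ 48 * K ^ 2) : (QS K R).card ≤ 6 * E ^ 2 * (2 * K + 1) := by
  have c1 : (sdiv R ×ˢ Finset.Icc (-(K : ℤ)) K).card ≤ 2 * E * (2 * K + 1) := by
    rw [Finset.card_product]
    refine Nat.mul_le_mul ((card_sdiv R).trans ?_) ?_
    · exact Nat.mul_le_mul_left _ (hE R (by omega))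
    · rw [Int.card_Icc]; omega
  refine (Finset.card_union_le _ _).trans ?_
  have h2 := Finset.card_image_le (s := sdiv R ×ˢ Finset.Icc (-(K : ℤ)) K)
    (f := fun p => ((0 : ℤ), p.1, p.2))
  have h1 := Finset.card_biUnion_le_card_mul (sdiv R ×ˢ Finset.Icc (-(K : ℤ)) K) (fun p =>
    (sdiv ((p.2 ^ 2 - p.1) / 4).natAbs).image fun A => (A, p.2, ((p.2 ^ 2 - p.1) / 4) / A))
    (2 * E) (by
      rintro ⟨D, B⟩ hp
      simp only [Finset.mem_product, mem_sdiv, Finset.mem_Icc] at hp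
      obtain ⟨⟨h1, h2⟩, h3, h4⟩ := hp
      refine Finset.card_image_le.trans ((card_sdiv _).trans (Nat.mul_le_mul_left _ (hE _ ?_)))
      have h5 := (Nat.le_of_dvd (Nat.pos_of_ne_zero h2) h1).trans hR
      have h6 : (D.natAbs : ℤ) ≤ 48 * (K : ℤ) ^ 2 := by exact_mod_cast h5
      rw [Int.natCast_natAbs, abs_le] at h6
      have h7 : B ^ 2 ≤ (K : ℤ) ^ 2 := sq_le_sq' h3 h4
      have h8 : (((B ^ 2 - D) / 4).natAbs : ℤ) ≤ 50 * (K : ℤ) ^ 2 := by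
        have := sq_nonneg B
        generalize (K : ℤ) ^ 2 = k2 at *
        generalize B ^ 2 = b2 at *
        omega
      exact_mod_cast h8)
  calc _ ≤ 2 * E * (2 * K + 1) * (2 * E) + 2 * E * (2 * K + 1) :=
        add_le_add (h1.trans (Nat.mul_le_mul_right _ c1)) (h2.trans c1)
    _ ≤ _ := by nlinarith [Nat.zero_le (E * (2 * K + 1)), Nat.mul_le_mul_left (E * (2 * K + 1)) hE1]

theorem mem_QS {K R : ℕ} {A B C : ℤ} (hR : R ≠ 0) (hd : B ^ 2 - 4 * A * C ∣ (R : ℤ))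
    (hr : Red A B C) (hB : |B| ≤ K) : (A, B, C) ∈ QS K R := by
  obtain ⟨r1, r2, r3⟩ := hr
  simp only [QS, Finset.mem_union, Finset.mem_biUnion, Finset.mem_image, Finset.mem_product,
    mem_sdiv, Finset.mem_Icc]
  by_cases hA : A = 0
  · right
    subst hA
    have hC := r2 rfl
    refine ⟨(B, C), ⟨⟨?_, hR⟩, ?_⟩, rfl⟩
    · have : B ∣ (R : ℤ) := dvd_trans ⟨B, by ring⟩ hd
      exact Int.natAbs_dvd_natAbs.2 this
    · exact abs_le.1 (hC.trans hB)
  · left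
    have hC := r3 hA
    have e : (B ^ 2 - (B ^ 2 - 4 * A * C)) / 4 = A * C := by
      rw [show B ^ 2 - (B ^ 2 - 4 * A * C) = 4 * (A * C) by ring]
      exact Int.mul_ediv_cancel_left _ (by norm_num)
    refine ⟨(B ^ 2 - 4 * A * C, B), ⟨⟨Int.natAbs_dvd_natAbs.2 hd, hR⟩, abs_le.1 hB⟩, A, ?_, ?_⟩
    · rw [e]; exact ⟨Int.natAbs_dvd_natAbs.2 ⟨C, rfl⟩, by simp [hA, hC]⟩
    · rw [e, Int.mul_ediv_cancel_left _ hA]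

def HJ (K : ℕ) (I : ℤ) : Finset (Σ _ : ℕ, ℕ) :=
  ((Finset.Icc 1 K).filter (fun h : ℕ => (h : ℤ) ^ 2 ∣ 288 * I)).sigma (fun h => Finset.range h)

theorem count_mult {K h : ℕ} (h1 : 1 ≤ h) (hK : h ≤ K) :
    ((Finset.Icc (-(K : ℤ) ^ 2) (K ^ 2)).filter (fun I => (h : ℤ) ^ 2 ∣ 288 * I)).card * h ^ 2
      ≤ 577 * K ^ 2 := by
  set S := (Finset.Icc (-(K : ℤ) ^ 2) (K ^ 2)).filter (fun I => (h : ℤ) ^ 2 ∣ 288 * I) with hS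
  set q := 288 * K ^ 2 / h ^ 2 with hq
  have hpos : 0 < h ^ 2 := by positivity
  have hposz : (0 : ℤ) < (h : ℤ) ^ 2 := by exact_mod_cast hpos
  have hc : S.card ≤ (Finset.Icc (-(q : ℤ)) q).card := by
    apply Finset.card_le_card_of_injOn (fun I => 288 * I / (h : ℤ) ^ 2)
    · intro I hI
      simp only [hS, Finset.coe_filter, Finset.mem_Icc, Set.mem_ofPred_eq] at hI
      obtain ⟨⟨a, b⟩, r, hr⟩ := hI
      simp only [Finset.coe_Icc, Set.mem_Icc]
      rw [hr, Int.mul_ediv_cancel_left _ hposz.ne']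
      have hqz : (q : ℤ) = 288 * (K : ℤ) ^ 2 / (h : ℤ) ^ 2 := by rw [hq]; push_cast; rfl
      rw [hqz]
      constructor
      · rw [neg_le]; apply Int.le_ediv_of_mul_le hposz; nlinarith
      · apply Int.le_ediv_of_mul_le hposz; nlinarith
    · intro I hI I' hI' e
      simp only [hS, Finset.coe_filter, Finset.mem_Icc, Set.mem_ofPred_eq] at hI hI'
      have a1 := Int.ediv_mul_cancel hI.2
      have a2 := Int.ediv_mul_cancel hI'.2
      simp only at e
      rw [e] at a1; linarith
  rw [Int.card_Icc] at hc
  have hc' : S.card ≤ 2 * q + 1 := by omega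
  have hqm : q * h ^ 2 ≤ 288 * K ^ 2 := Nat.div_mul_le_self _ _
  have hh : h ^ 2 ≤ K ^ 2 := Nat.pow_le_pow_left hK 2
  nlinarith

theorem sum_HJ (K : ℕ) :
    (∑ I ∈ Finset.Icc (-(K : ℤ) ^ 2) (K ^ 2), ((HJ K I).card : ℝ))
      ≤ 577 * K ^ 2 * (1 + Real.log K) := by
  have e : ∀ I, ((HJ K I).card : ℝ) =
      ∑ h ∈ Finset.Icc 1 K, if (h : ℤ) ^ 2 ∣ 288 * I then (h : ℝ) else 0 := by
    intro I
    rw [HJ, Finset.card_sigma, ← Finset.sum_filter]; push_cast; simp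
  simp_rw [e]
  rw [Finset.sum_comm]
  have b : ∀ h ∈ Finset.Icc 1 K, (∑ I ∈ Finset.Icc (-(K : ℤ) ^ 2) (K ^ 2),
      if (h : ℤ) ^ 2 ∣ 288 * I then (h : ℝ) else 0) ≤ 577 * K ^ 2 * (h : ℝ)⁻¹ := by
    intro h hh
    rw [Finset.mem_Icc] at hh
    rw [← Finset.sum_filter, Finset.sum_const, nsmul_eq_mul]
    have := count_mult hh.1 hh.2
    have h2 : ((((Finset.Icc (-(K : ℤ) ^ 2) (K ^ 2)).filter (fun I => (h : ℤ) ^ 2 ∣ 288 * I)).card : ℝ))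
      * (h : ℝ) ^ 2 ≤ 577 * (K : ℝ) ^ 2 := by exact_mod_cast this
    have hp : (0 : ℝ) < h := by exact_mod_cast hh.1
    rw [← div_eq_mul_inv, le_div_iff₀ hp]
    linarith
  refine (Finset.sum_le_sum b).trans ?_
  rw [← Finset.mul_sum]
  gcongr
  have := harmonic_le_one_add_log K
  rw [harmonic_eq_sum_Icc] at this
  push_cast at this
  exact this

def TK (K : ℕ) : Finset Lab :=
  (Finset.Icc (-(K : ℤ) ^ 2) (K ^ 2) ×ˢ Finset.Icc (-(K : ℤ)) K).sigma fun p =>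
    QS K (24 * (p.1 - p.2 ^ 2)).natAbs ×ˢ
      (((4 * p.1 - p.2 ^ 2) / 3).natAbs.divisors ×ˢ ((4 * p.1 - p.2 ^ 2) / 3).natAbs.divisors) ×ˢ
      HJ K p.1 ×ˢ (Finset.univ : Finset (Fin 8))

theorem card_TK {K E : ℕ} (hE1 : 1 ≤ E) (hE : ∀ m ≤ 50 * K ^ 2, m.divisors.card ≤ E) :
    ((TK K).card : ℝ) ≤ 48 * E ^ 4 * (2 * K + 1) ^ 2 * (577 * K ^ 2 * (1 + Real.log K)) := by
  rw [TK, Finset.card_sigma]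
  push_cast
  have b : ∀ p ∈ Finset.Icc (-(K : ℤ) ^ 2) (K ^ 2) ×ˢ Finset.Icc (-(K : ℤ)) K,
      (((QS K (24 * (p.1 - p.2 ^ 2)).natAbs ×ˢ
      (((4 * p.1 - p.2 ^ 2) / 3).natAbs.divisors ×ˢ ((4 * p.1 - p.2 ^ 2) / 3).natAbs.divisors) ×ˢ
      HJ K p.1 ×ˢ (Finset.univ : Finset (Fin 8))).card : ℕ) : ℝ) ≤
      48 * E ^ 4 * (2 * K + 1) * ((HJ K p.1).card : ℝ) := by
    rintro ⟨I, t⟩ hp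
    simp only [Finset.mem_product, Finset.mem_Icc] at hp
    obtain ⟨⟨h1, h2⟩, h3, h4⟩ := hp
    have h7 : t ^ 2 ≤ (K : ℤ) ^ 2 := sq_le_sq' h3 h4
    have h8 := sq_nonneg t
    have q := card_QS hE1 hE (R := (24 * (I - t ^ 2)).natAbs) (by
      have : ((24 * (I - t ^ 2)).natAbs : ℤ) ≤ 48 * (K : ℤ) ^ 2 := by
        generalize (K : ℤ) ^ 2 = k2 at *
        generalize t ^ 2 = b2 at *
        omega
      exact_mod_cast this)
    have d := hE ((4 * I - t ^ 2) / 3).natAbs (by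
      have : (((4 * I - t ^ 2) / 3).natAbs : ℤ) ≤ 50 * (K : ℤ) ^ 2 := by
        generalize (K : ℤ) ^ 2 = k2 at *
        generalize t ^ 2 = b2 at *
        omega
      exact_mod_cast this)
    simp only [Finset.card_product, Finset.card_univ, Fintype.card_fin]
    have : (QS K (24 * (I - t ^ 2)).natAbs).card * (((4 * I - t ^ 2) / 3).natAbs.divisors.card *
      ((4 * I - t ^ 2) / 3).natAbs.divisors.card * ((HJ K I).card * 8)) ≤
      (6 * E ^ 2 * (2 * K + 1)) * (E * E * ((HJ K I).card * 8)) := by gcongr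
    have := (Nat.cast_le (α := ℝ)).2 this
    refine this.trans (le_of_eq ?_)
    push_cast; ring
  refine (Finset.sum_le_sum b).trans ?_
  rw [Finset.sum_product]
  simp only [Finset.sum_const, nsmul_eq_mul]
  rw [Int.card_Icc]
  have hc : (((K : ℤ) + 1 - -(K : ℤ)).toNat : ℝ) = 2 * K + 1 := by
    have : ((K : ℤ) + 1 - -(K : ℤ)).toNat = 2 * K + 1 := by omega
    rw [this]; push_cast; ring
  rw [hc]
  simp_rw [← mul_assoc]
  rw [← Finset.mul_sum]
  have := sum_HJ K
  have h0 : (0 : ℝ) ≤ (2 * K + 1) * 48 * E ^ 4 * (2 * K + 1) := by positivity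
  have := mul_le_mul_of_nonneg_left this h0
  refine this.trans (le_of_eq (by ring))

theorem mem_TK {K : ℕ} {l : Lab} {J : ℤ} (hg : GoodLab l.1.1 J l.1.2 l.2.1.1 l.2.1.2.1 l.2.1.2.2
        l.2.2.1.1 l.2.2.1.2 l.2.2.2.1.1 l.2.2.2.1.2) (hI : |l.1.1| ≤ (K : ℤ) ^ 2) (ht : |l.1.2| ≤ K)
    (hB : |l.2.1.2.1| ≤ K) (hh : l.2.2.2.1.1 ≤ K) : l ∈ TK K := by
  obtain ⟨⟨I, t⟩, ⟨A, B, C⟩, ⟨c, g⟩, ⟨h, j⟩, e⟩ := l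
  simp only at hg hI ht hB hh
  obtain ⟨g1, g2, g3, g4, g5, g6, g7, g8, g9, g10, g11, g12⟩ := hg
  simp only [TK, Finset.mem_sigma, Finset.mem_product, Finset.mem_Icc, Nat.mem_divisors, HJ,
    Finset.mem_filter, Finset.mem_range, Finset.mem_univ, and_true]
  have hI' := abs_le.1 hI
  have hn : ((4 * I - t ^ 2) / 3).natAbs ≠ 0 := Int.natAbs_ne_zero.2 g7
  refine ⟨⟨hI', abs_le.1 ht⟩, ?_, ⟨⟨g8, hn⟩, g9, hn⟩, ⟨⟨by omega, hh⟩, g12⟩, g10⟩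
  apply mem_QS _ _ g3 hB
  · simpa using g5
  · exact Int.dvd_natAbs.2 g4



theorem lab_bounds {X Y : ℝ} (hY : 1 ≤ Y) (hXY : Y ^ 6 = X) {I J : ℤ}
    (hH : heightIJ (I : ℝ) (J : ℝ) < X) {t A B C : ℤ} {c g h j : ℕ}
    (hg : GoodLab I J t A B C c g h j) :
    |I| ≤ (⌊11 * Y⌋₊ : ℤ) ^ 2 ∧ |t| ≤ (⌊11 * Y⌋₊ : ℤ) ∧ |B| ≤ (⌊11 * Y⌋₊ : ℤ) ∧ h ≤ ⌊11 * Y⌋₊ := by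
  obtain ⟨g1, g2, g3, g4, g5, g6, g7, g8, g9, g10, g11, g12⟩ := hg
  have hY0 : 0 < Y := by linarith
  rw [heightIJ, max_lt_iff, ← hXY] at hH
  obtain ⟨hI, hJ⟩ := hH
  have hI' : |(I : ℝ)| < Y ^ 2 := by
    have : |(I : ℝ)| ^ 3 < (Y ^ 2) ^ 3 := by rw [← pow_mul]; exact hI
    exact lt_of_pow_lt_pow_left₀ 3 (by positivity) this
  have hJ' : |(J : ℝ)| < 2 * Y ^ 3 := by
    apply abs_lt_of_sq_lt_sq _ (by positivity)
    nlinarith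
  have fl : ∀ z : ℤ, |(z : ℝ)| ≤ 11 * Y → |z| ≤ (⌊11 * Y⌋₊ : ℤ) := by
    intro z hz
    have : z.natAbs ≤ ⌊11 * Y⌋₊ := Nat.le_floor (by rw [Nat.cast_natAbs]; exact_mod_cast hz)
    rw [Int.abs_eq_natAbs]; exact_mod_cast this
  have ht : |(t : ℝ)| ≤ 2 * Y := by
    by_contra hc
    push Not at hc
    have e : (t : ℝ) ^ 3 = 3 * I * t + J := by exact_mod_cast g1
    have e2 : |(t : ℝ)| ^ 3 ≤ 3 * |(I : ℝ)| * |(t : ℝ)| + |(J : ℝ)| := by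
      rw [← abs_pow, e]
      refine (abs_add_le _ _).trans ?_
      rw [abs_mul, abs_mul]; simp
    have e3 : |(I : ℝ)| * |(t : ℝ)| ≤ Y ^ 2 * |(t : ℝ)| :=
      mul_le_mul_of_nonneg_right hI'.le (abs_nonneg _)
    have e4 : 0 < (|(t : ℝ)| - 2 * Y) * (|(t : ℝ)| + Y) ^ 2 := by
      apply mul_pos (by linarith)
      have := abs_nonneg (t : ℝ)
      positivity
    nlinarith
  have ht2 : (t : ℝ) ^ 2 ≤ 4 * Y ^ 2 := by
    rw [← sq_abs]; nlinarith [abs_nonneg (t : ℝ)]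
  have ht0 := sq_nonneg (t : ℝ)
  obtain ⟨hI1, hI2⟩ := abs_lt.1 hI'
  refine ⟨?_, fl t (by linarith), fl B ?_, ?_⟩
  · have h1 : Y ≤ (⌊11 * Y⌋₊ : ℝ) := by have := Nat.lt_floor_add_one (11 * Y); linarith
    have h2 : (|I| : ℝ) ≤ (⌊11 * Y⌋₊ : ℝ) ^ 2 := by nlinarith
    exact_mod_cast h2
  · have h1 : |B ^ 2 - 4 * A * C| ≤ |24 * (I - t ^ 2)| :=
      Int.le_of_dvd (abs_pos.2 (by simpa using g5)) (by rwa [abs_dvd_abs])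
    have h2 := g3.1.trans h1
    have h3 : (B : ℝ) ^ 2 ≤ |24 * ((I : ℝ) - t ^ 2)| := by exact_mod_cast h2
    have h4 : |24 * ((I : ℝ) - t ^ 2)| ≤ 120 * Y ^ 2 := by
      rw [abs_le]; constructor <;> nlinarith
    apply abs_le_of_sq_le_sq _ (by positivity)
    nlinarith
  · have h1 : (h : ℤ) ^ 2 ≤ |(4 * I - t ^ 2) / 3| :=
      Int.le_of_dvd (abs_pos.2 g7) (by rwa [dvd_abs])
    have h2 : 3 * (h : ℤ) ^ 2 ≤ |4 * I - t ^ 2| := by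
      rw [g6, abs_mul]; norm_num; exact h1
    have h3 : 3 * (h : ℝ) ^ 2 ≤ |4 * (I : ℝ) - t ^ 2| := by exact_mod_cast h2
    have h4 : |4 * (I : ℝ) - t ^ 2| ≤ 8 * Y ^ 2 := by
      rw [abs_le]; constructor <;> nlinarith
    apply Nat.le_floor
    apply le_of_sq_le_sq _ (by positivity)
    nlinarith

theorem analytic_bound (δ : ℝ) (hδ : 0 < δ) : ∃ Cf : ℝ, 0 < Cf ∧ ∀ Y : ℝ, 1 ≤ Y →
    ((TK ⌊11 * Y⌋₊).card : ℝ) ≤ Cf * (Y ^ 4 * (Y ^ δ) ^ 9) := by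
  obtain ⟨C0, hC0, hdiv⟩ := divisor_bound δ hδ
  set c1 : ℝ := C0 * 6050 ^ δ with hc1
  set c2 : ℝ := (1 + 1 / δ) * 11 ^ δ with hc2
  have hC0p : 0 < C0 := by linarith
  have hc1p : 0 < c1 := by positivity
  have hc2p : 0 < c2 := by positivity
  refine ⟨48 * c1 ^ 4 * 33 ^ 2 * (577 * 121 * c2), by positivity, fun Y hY => ?_⟩
  have hY0 : 0 < Y := by linarith
  set K := ⌊11 * Y⌋₊ with hK
  have hKY : (K : ℝ) ≤ 11 * Y := Nat.floor_le (by positivity)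
  have hK1 : 1 ≤ K := Nat.le_floor (by push_cast; linarith)
  have hK1' : (1 : ℝ) ≤ K := by exact_mod_cast hK1
  set Z := Y ^ δ with hZ
  have hZ0 : 0 < Z := by positivity
  set e0 : ℝ := C0 * (50 * (K : ℝ) ^ 2) ^ δ with he0
  have he1 : 1 ≤ e0 := by
    have : (1 : ℝ) ≤ (50 * (K : ℝ) ^ 2) ^ δ := Real.one_le_rpow (by nlinarith) hδ.le
    nlinarith
  have he2 : e0 ≤ c1 * Z ^ 2 := by
    have h1 : (50 * (K : ℝ) ^ 2) ^ δ ≤ (6050 * Y ^ 2) ^ δ :=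
      Real.rpow_le_rpow (by positivity) (by nlinarith) hδ.le
    have h2 : (6050 * Y ^ 2) ^ δ = 6050 ^ δ * Z ^ 2 := by
      rw [Real.mul_rpow (by norm_num) (by positivity), hZ, ← Real.rpow_natCast, ← Real.rpow_natCast,
        ← Real.rpow_mul hY0.le, ← Real.rpow_mul hY0.le, mul_comm δ]
    rw [h2] at h1
    calc e0 ≤ C0 * (6050 ^ δ * Z ^ 2) := by rw [he0]; gcongr
      _ = _ := by rw [hc1]; ring
  have hE1 : 1 ≤ ⌊e0⌋₊ := Nat.le_floor (by exact_mod_cast he1)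
  have hE : ∀ m ≤ 50 * K ^ 2, m.divisors.card ≤ ⌊e0⌋₊ := by
    intro m hm
    by_cases h0 : m = 0
    · simp [h0]
    · apply Nat.le_floor
      refine (hdiv m h0).trans ?_
      rw [he0]
      have : (m : ℝ) ≤ 50 * (K : ℝ) ^ 2 := by exact_mod_cast hm
      gcongr
  have hEr : (⌊e0⌋₊ : ℝ) ≤ c1 * Z ^ 2 := (Nat.floor_le (by linarith)).trans he2
  have hlog : 1 + Real.log K ≤ c2 * Z := by
    have h1 : Real.log K ≤ (K : ℝ) ^ δ / δ := Real.log_le_rpow_div (by positivity) hδ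
    have h2 : (K : ℝ) ^ δ ≤ 11 ^ δ * Z := by
      rw [hZ, ← Real.mul_rpow (by norm_num) hY0.le]
      exact Real.rpow_le_rpow (by positivity) hKY hδ.le
    have h3 : 1 ≤ (K : ℝ) ^ δ := Real.one_le_rpow hK1' hδ.le
    calc 1 + Real.log K ≤ (K : ℝ) ^ δ + (K : ℝ) ^ δ / δ := by linarith
      _ = (1 + 1 / δ) * (K : ℝ) ^ δ := by ring
      _ ≤ (1 + 1 / δ) * (11 ^ δ * Z) := by gcongr
      _ = c2 * Z := by rw [hc2]; ring
  have hlog0 : 0 ≤ 1 + Real.log K := by have := Real.log_nonneg hK1'; linarith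
  calc ((TK K).card : ℝ) ≤ 48 * (⌊e0⌋₊ : ℝ) ^ 4 * (2 * K + 1) ^ 2 * (577 * K ^ 2 * (1 + Real.log K)) :=
        card_TK hE1 hE
    _ ≤ 48 * (c1 * Z ^ 2) ^ 4 * (33 * Y) ^ 2 * (577 * (11 * Y) ^ 2 * (c2 * Z)) := by
        gcongr
        linarith
    _ = _ := by ring

theorem nontrivial_stabiliser_count :
    ∀ ε > (0 : ℝ), ∃ C > (0 : ℝ), ∀ X : ℝ, 1 ≤ X →
      Finite (Quot (stabFormsRel X)) ∧
      (Nat.card (Quot (stabFormsRel X)) : ℝ) ≤ C * X ^ ((2 : ℝ) / 3 + ε) := by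
  intro ε hε
  obtain ⟨Cf, hCf, hb⟩ := analytic_bound (2 * ε / 3) (by positivity)
  obtain ⟨Λ, hΛ1, hΛ2⟩ := full_label
  refine ⟨Cf, hCf, fun X hX => ?_⟩
  have hX0 : 0 < X := by linarith
  set Y : ℝ := X ^ ((1 : ℝ) / 6) with hYdef
  have hY : 1 ≤ Y := Real.one_le_rpow hX (by norm_num)
  have hXY : Y ^ 6 = X := by
    rw [hYdef, ← Real.rpow_natCast, ← Real.rpow_mul hX0.le]; norm_num
  have hYe : Y ^ 4 * (Y ^ (2 * ε / 3)) ^ 9 = X ^ ((2 : ℝ) / 3 + ε) := by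
    rw [hYdef, ← Real.rpow_natCast, ← Real.rpow_natCast, ← Real.rpow_mul hX0.le,
      ← Real.rpow_mul hX0.le, ← Real.rpow_mul hX0.le, ← Real.rpow_add hX0]
    congr 1; push_cast; ring
  let toSF : StabForms X → SF := fun f => ⟨f.1, f.2.1, f.2.2.2⟩
  have hmem : ∀ f : StabForms X, Λ (toSF f) ∈ TK ⌊11 * Y⌋₊ := by
    intro f
    obtain ⟨e, hg⟩ := hΛ1 (toSF f)
    have hbd := lab_bounds hY hXY (I := f.1.invI) (J := f.1.invJ) f.2.2.1 hg
    obtain ⟨b1, b2, b3, b4⟩ := hbd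
    have hg' := hg
    rw [← e] at hg'
    refine mem_TK hg' ?_ b2 b3 b4
    rw [e]; exact b1
  let F : Quot (stabFormsRel X) → TK ⌊11 * Y⌋₊ := fun q => ⟨Λ (toSF q.out), hmem _⟩
  have hF : Function.Injective F := by
    intro q q' h
    have h1 : Λ (toSF q.out) = Λ (toSF q'.out) := congrArg Subtype.val h
    have h2 : stabFormsRel X q.out q'.out := hΛ2 _ _ h1
    rw [← Quot.out_eq q, ← Quot.out_eq q']
    exact Quot.sound h2
  refine ⟨Finite.of_injective F hF, ?_⟩
  have hc := Nat.card_le_card_of_injective F hF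
  have e2 : Nat.card (TK ⌊11 * Y⌋₊) = (TK ⌊11 * Y⌋₊).card := by
    rw [Nat.card_eq_fintype_card, Fintype.card_coe]
  rw [e2] at hc
  rw [← hYe]
  exact le_trans (by exact_mod_cast hc) (hb Y hY)



end BQPaper
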